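/- arXiv:0806.4687 — 4 statements merged into one kernel-verified Lean document; each statement's English description precedes it below -/
import Mathlib

section
/- Let G be the free group on generators a_1,…,a_n, let H be a free group of rank greater than 1, let φ, ψ : G → H be group homomorphisms, and let u, v ∈ H. Form the (n+2)-tuple t = (φ(a_1),…,φ(a_n), u, v) of elements of H. If t has remnant and |Rem_t φ(a_i)| ≥ |ψ(a_i)| for every i ∈ {1,…,n}, then there is no z ∈ G with u = φ(z)·v·ψ(z)⁻¹; that is, u and v lie in distinct doubly-twisted conjugacy classes with respect to (φ, ψ). -/
/-- Half the total cancellation in the product `x * y` of elements of a free group: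
`(|x| + |y| - |x*y|) / 2`. -/
def cancelLen {β : Type} [DecidableEq β] (x y : FreeGroup β) : ℕ :=
  (FreeGroup.norm x + FreeGroup.norm y - FreeGroup.norm (x * y)) / 2

/-- `x` or `x⁻¹`, according to the sign `b` (`true` = exponent `1`, `false` = exponent `-1`). -/
def pmPow {β : Type} [DecidableEq β] (b : Bool) (x : FreeGroup β) : FreeGroup β :=
  if b then x else x⁻¹

/-- The left cancellation `L_i` of the `i`-th entry of the tuple `t`: the maximum of
`(|h_j^α| + |h_i| - |h_j^α * h_i|)/2` over pairs `(j, α)` with `(j, α) ≠ (i, -1)`. -/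
def leftCancel {β : Type} [DecidableEq β] {N : ℕ} (t : Fin N → FreeGroup β) (i : Fin N) : ℕ :=
  Finset.univ.sup fun p : Fin N × Bool =>
    if p.1 = i ∧ p.2 = false then 0 else cancelLen (pmPow p.2 (t p.1)) (t i)

/-- The right cancellation `R_i` of the `i`-th entry of the tuple `t`: the maximum of
`(|h_i| + |h_k^β| - |h_i * h_k^β|)/2` over pairs `(k, β)` with `(k, β) ≠ (i, -1)`. -/
def rightCancel {β : Type} [DecidableEq β] {N : ℕ} (t : Fin N → FreeGroup β) (i : Fin N) : ℕ :=
  Finset.univ.sup fun p : Fin N × Bool =>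
    if p.1 = i ∧ p.2 = false then 0 else cancelLen (t i) (pmPow p.2 (t p.1))

/-- The remnant length `|Rem_t h_i| = |h_i| - L_i - R_i` of the `i`-th entry of `t`. -/
def remLen {β : Type} [DecidableEq β] {N : ℕ} (t : Fin N → FreeGroup β) (i : Fin N) : ℕ :=
  FreeGroup.norm (t i) - leftCancel t i - rightCancel t i

/-- A tuple has remnant if `|h_i| - L_i - R_i ≥ 1` for all `i`. -/
def HasRemnant {β : Type} [DecidableEq β] {N : ℕ} (t : Fin N → FreeGroup β) : Prop :=
  ∀ i, 1 ≤ remLen t i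

/-!
In a word `h₁ h₂ ⋯ hₘ` that is reduced in the entries of a tuple with remnant, the cancellation
between neighbours never reaches across a whole letter: multiplying `h₂` by the rest of the word
leaves the part of `h₂` that cancels against `h₁` untouched. Hence each letter contributes at least
its remnant to the length of the product.

If `u = φ z * v * (ψ z)⁻¹`, then `ψ z = u⁻¹ * φ z * v` is such a word. Its length therefore strictly
exceeds the sum of `|Rem φ(aᵢ)|` over the letters of `z`, which is at least the corresponding sum of
`|ψ(aᵢ)|`, an upper bound for `|ψ z|`.
-/

section ReducedWords

variable {α : Type*}

theorem isReduced_invRev_append_of_ne {a b : α × Bool} {x y : List (α × Bool)}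
    (hx : FreeGroup.IsReduced (a :: x)) (hy : FreeGroup.IsReduced (b :: y)) (hab : a ≠ b) :
    FreeGroup.IsReduced (FreeGroup.invRev (a :: x) ++ b :: y) := by
  classical
  have hx' : FreeGroup.IsReduced (FreeGroup.invRev (a :: x)) := by
    rw [FreeGroup.isReduced_iff_reduce_eq, FreeGroup.reduce_invRev, hx.reduce_eq]
  refine List.isChain_append.2 ⟨hx', hy, ?_⟩
  rcases a with ⟨i, s⟩
  rcases b with ⟨j, r⟩
  cases s <;> cases r <;> simp_all [FreeGroup.invRev]

theorem isReduced_cons_map_append_singleton {γ : Type*} {f : α → γ} (hf : f.Injective)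
    {a b : γ × Bool} (ha : a.1 ∉ Set.range f) (hb : b.1 ∉ Set.range f) (hab : a.1 ≠ b.1)
    {w : List (α × Bool)} (hw : FreeGroup.IsReduced w) :
    FreeGroup.IsReduced (a :: (w.map (Prod.map f id) ++ [b])) := by
  have hmem {q : γ × Bool} (hq : q ∈ w.map (Prod.map f id)) : q.1 ∈ Set.range f := by
    obtain ⟨p, -, rfl⟩ := List.mem_map.1 hq
    exact ⟨p.1, rfl⟩
  have hmap : FreeGroup.IsReduced (w.map (Prod.map f id)) :=
    List.isChain_map_of_isChain _ (fun _ _ hpq h => hpq (hf h)) hw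
  have happend : FreeGroup.IsReduced (w.map (Prod.map f id) ++ [b]) := by
    refine List.isChain_append.2 ⟨hmap, List.isChain_singleton b, ?_⟩
    rintro q hq _ ⟨⟩ hqb
    exact absurd (hqb ▸ hmem (List.mem_of_getLast? hq)) hb
  refine List.isChain_cons.2 ⟨fun q hq haq => ?_, happend⟩
  rcases List.mem_append.1 (List.mem_of_head? hq) with hq | hq
  · exact absurd (haq ▸ hmem hq) ha
  · exact absurd (List.mem_singleton.1 hq ▸ haq) hab

variable [DecidableEq α]

/-- The length of the longest common prefix of two lists. For reduced words of a free group it is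
the Gromov product, based at `1`, of the elements they represent. -/
def commonPrefixLen : List α → List α → ℕ
  | a :: x, b :: y => if a = b then commonPrefixLen x y + 1 else 0
  | [], _ => 0
  | _ :: _, [] => 0

theorem min_commonPrefixLen_le (x y z : List α) :
    min (commonPrefixLen x y) (commonPrefixLen y z) ≤ commonPrefixLen x z := by
  induction x generalizing y z with
  | nil => simp [commonPrefixLen]
  | cons a x ih =>
    rcases y with _ | ⟨b, y⟩
    · simp [commonPrefixLen]
    rcases z with _ | ⟨c, z⟩
    · simp [commonPrefixLen]
    have := ih y z
    grind [commonPrefixLen]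

theorem norm_inv_mk_mul_mk_add_two_mul_commonPrefixLen {x y : List (α × Bool)}
    (hx : FreeGroup.IsReduced x) (hy : FreeGroup.IsReduced y) :
    ((FreeGroup.mk x)⁻¹ * FreeGroup.mk y).norm + 2 * commonPrefixLen x y =
      x.length + y.length := by
  induction x generalizing y with
  | nil => simp [← FreeGroup.one_eq_mk, commonPrefixLen, FreeGroup.norm, hy.reduce_eq]
  | cons a x ih =>
    rcases y with _ | ⟨b, y⟩
    · rw [← FreeGroup.one_eq_mk, mul_one, FreeGroup.norm_inv_eq]
      simp [commonPrefixLen, FreeGroup.norm, hx.reduce_eq]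
    by_cases hab : a = b
    · subst hab
      have cancel_head : (FreeGroup.mk (a :: x))⁻¹ * FreeGroup.mk (a :: y) =
          (FreeGroup.mk x)⁻¹ * FreeGroup.mk y := by
        rw [← List.singleton_append, ← List.singleton_append (l := y), ← FreeGroup.mul_mk,
          ← FreeGroup.mul_mk]
        group
      have := ih (hx.infix (List.suffix_cons a x).isInfix) (hy.infix (List.suffix_cons a y).isInfix)
      simp only [cancel_head, commonPrefixLen, if_true, List.length_cons]
      lia
    · rw [FreeGroup.inv_mk, FreeGroup.mul_mk, FreeGroup.norm, FreeGroup.toWord_mk,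
        (isReduced_invRev_append_of_ne hx hy hab).reduce_eq]
      simp [commonPrefixLen, hab]

end ReducedWords

section Cancellation

variable {β : Type} [DecidableEq β]

theorem norm_mul_add_two_mul_commonPrefixLen (x y : FreeGroup β) :
    (x * y).norm + 2 * commonPrefixLen x⁻¹.toWord y.toWord = x.norm + y.norm := by
  have := norm_inv_mk_mul_mk_add_two_mul_commonPrefixLen
    (FreeGroup.isReduced_toWord (x := x⁻¹)) (FreeGroup.isReduced_toWord (x := y))
  rw [FreeGroup.mk_toWord, FreeGroup.mk_toWord, inv_inv] at this
  rwa [← FreeGroup.norm_inv_eq (x := x)]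

theorem cancelLen_eq_commonPrefixLen (x y : FreeGroup β) :
    cancelLen x y = commonPrefixLen x⁻¹.toWord y.toWord := by
  have := norm_mul_add_two_mul_commonPrefixLen x y
  unfold cancelLen
  lia

theorem norm_mul_add_two_mul_cancelLen (x y : FreeGroup β) :
    (x * y).norm + 2 * cancelLen x y = x.norm + y.norm := by
  rw [cancelLen_eq_commonPrefixLen, norm_mul_add_two_mul_commonPrefixLen]

theorem cancelLen_inv_inv (x y : FreeGroup β) : cancelLen y⁻¹ x⁻¹ = cancelLen x y := by
  simp only [cancelLen, ← mul_inv_rev, FreeGroup.norm_inv_eq, add_comm]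

-- The Cayley graph of a free group is a tree, so its Gromov products `cancelLen x⁻¹ y` satisfy the
-- ultrametric inequality.
theorem min_cancelLen_le (x y z : FreeGroup β) :
    min (cancelLen x y) (cancelLen y⁻¹ z) ≤ cancelLen x z := by
  simpa only [cancelLen_eq_commonPrefixLen, inv_inv] using min_commonPrefixLen_le _ y.toWord _

theorem cancelLen_inv_mul_add_cancelLen (y z : FreeGroup β) :
    cancelLen y⁻¹ (y * z) + cancelLen y z = y.norm := by
  have hyz := norm_mul_add_two_mul_cancelLen y z
  have hinv := norm_mul_add_two_mul_cancelLen y⁻¹ (y * z)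
  rw [inv_mul_cancel_left, FreeGroup.norm_inv_eq] at hinv
  lia

theorem cancelLen_mul_right_eq {x y z : FreeGroup β}
    (h : cancelLen x y + cancelLen y z < y.norm) : cancelLen x (y * z) = cancelLen x y := by
  have hsplit := cancelLen_inv_mul_add_cancelLen y z
  have hle := min_cancelLen_le x y (y * z)
  have hge := min_cancelLen_le x (y * z) y
  rw [← cancelLen_inv_inv y⁻¹, inv_inv] at hsplit hle
  lia

theorem inv_pmPow (b : Bool) (x : FreeGroup β) : (pmPow b x)⁻¹ = pmPow (!b) x := by
  cases b <;> simp [pmPow]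

theorem norm_pmPow (b : Bool) (x : FreeGroup β) : (pmPow b x).norm = x.norm := by
  cases b <;> simp [pmPow]

theorem lift_mk_cons {α : Type*} (t : α → FreeGroup β) (p : α × Bool) (w : List (α × Bool)) :
    FreeGroup.lift t (FreeGroup.mk (p :: w)) =
      pmPow p.2 (t p.1) * FreeGroup.lift t (FreeGroup.mk w) := by
  simp only [FreeGroup.lift_mk, List.map_cons, List.prod_cons, pmPow, Bool.cond_eq_ite]

theorem norm_lift_mk_le {α : Type*} (t : α → FreeGroup β) (w : List (α × Bool)) :
    (FreeGroup.lift t (FreeGroup.mk w)).norm ≤ (w.map fun p => (t p.1).norm).sum := by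
  induction w with
  | nil => simp [FreeGroup.lift_mk]
  | cons p w ih =>
    calc (FreeGroup.lift t (FreeGroup.mk (p :: w))).norm
        ≤ (pmPow p.2 (t p.1)).norm + (FreeGroup.lift t (FreeGroup.mk w)).norm := by
          rw [lift_mk_cons]; exact FreeGroup.norm_mul_le _ _
      _ ≤ ((p :: w).map fun p => (t p.1).norm).sum := by
          rw [norm_pmPow, List.map_cons, List.sum_cons]; gcongr

theorem norm_map_le_sum_norm_map_of {α : Type*} [DecidableEq α] (f : FreeGroup α →* FreeGroup β)
    (z : FreeGroup α) :
    (f z).norm ≤ (z.toWord.map fun p => (f (FreeGroup.of p.1)).norm).sum := by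
  have := norm_lift_mk_le (fun a => f (FreeGroup.of a)) z.toWord
  rwa [FreeGroup.mk_toWord, ← FreeGroup.lift_unique f fun _ => rfl] at this

end Cancellation

section Remnant

variable {β : Type} [DecidableEq β] {N : ℕ} {t : Fin N → FreeGroup β}

/-- The left cancellation of the letter `p = (i, b)`, which stands for `t i` or `(t i)⁻¹`. As
inversion exchanges left and right, it is `R_i` for the letter `(t i)⁻¹`, and the right cancellation
of `p` is the left cancellation of the inverse letter `(i, !b)`. -/
def letterLeftCancel (t : Fin N → FreeGroup β) (p : Fin N × Bool) : ℕ :=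
  if p.2 then leftCancel t p.1 else rightCancel t p.1

theorem cancelLen_le_leftCancel {i j : Fin N} {b : Bool} (h : ¬(j = i ∧ b = false)) :
    cancelLen (pmPow b (t j)) (t i) ≤ leftCancel t i := by
  refine le_trans ?_ (Finset.le_sup (Finset.mem_univ (j, b)))
  rw [if_neg h]

theorem cancelLen_le_rightCancel {i k : Fin N} {b : Bool} (h : ¬(k = i ∧ b = false)) :
    cancelLen (t i) (pmPow b (t k)) ≤ rightCancel t i := by
  refine le_trans ?_ (Finset.le_sup (Finset.mem_univ (k, b)))
  rw [if_neg h]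

theorem cancelLen_le_letterLeftCancel {p q : Fin N × Bool} (h : p.1 = q.1 → p.2 = q.2) :
    cancelLen (pmPow p.2 (t p.1)) (pmPow q.2 (t q.1)) ≤ letterLeftCancel t q := by
  rcases p with ⟨i, b⟩
  rcases q with ⟨j, _ | _⟩
  · rw [← cancelLen_inv_inv, inv_pmPow, inv_pmPow]
    exact cancelLen_le_rightCancel (by simpa using h)
  · exact cancelLen_le_leftCancel (by simpa using h)

theorem cancelLen_le_letterLeftCancel_not {p q : Fin N × Bool} (h : p.1 = q.1 → p.2 = q.2) :
    cancelLen (pmPow p.2 (t p.1)) (pmPow q.2 (t q.1)) ≤ letterLeftCancel t (p.1, !p.2) := by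
  rw [← cancelLen_inv_inv, inv_pmPow, inv_pmPow]
  exact cancelLen_le_letterLeftCancel (p := (q.1, !q.2)) (q := (p.1, !p.2))
    fun hqp => by rw [h hqp.symm]

namespace HasRemnant

theorem norm_pmPow_eq (ht : HasRemnant t) (p : Fin N × Bool) :
    (pmPow p.2 (t p.1)).norm =
      letterLeftCancel t p + remLen t p.1 + letterLeftCancel t (p.1, !p.2) := by
  have := ht p.1
  rcases p with ⟨i, _ | _⟩ <;> simp only [norm_pmPow, letterLeftCancel, remLen] at * <;> grind

theorem cancelLen_lift_mk_cons (ht : HasRemnant t) {p q : Fin N × Bool} {w : List (Fin N × Bool)}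
    (hw : FreeGroup.IsReduced (p :: q :: w)) :
    cancelLen (pmPow p.2 (t p.1)) (FreeGroup.lift t (FreeGroup.mk (q :: w))) =
      cancelLen (pmPow p.2 (t p.1)) (pmPow q.2 (t q.1)) := by
  induction w generalizing p q with
  | nil => rw [lift_mk_cons, ← FreeGroup.one_eq_mk, map_one, mul_one]
  | cons r w ih =>
    obtain ⟨hpq, hqw⟩ := FreeGroup.isReduced_cons_cons.1 hw
    obtain ⟨hqr, -⟩ := FreeGroup.isReduced_cons_cons.1 hqw
    rw [lift_mk_cons]
    apply cancelLen_mul_right_eq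
    rw [ih hqw]
    have := cancelLen_le_letterLeftCancel (t := t) hpq
    have := cancelLen_le_letterLeftCancel_not (t := t) hqr
    have := ht.norm_pmPow_eq q
    have := ht q.1
    lia

theorem letterLeftCancel_add_sum_remLen_le_norm (ht : HasRemnant t) {p : Fin N × Bool}
    {w : List (Fin N × Bool)} (hw : FreeGroup.IsReduced (p :: w)) :
    letterLeftCancel t p + ((p :: w).map fun q => remLen t q.1).sum ≤
      (FreeGroup.lift t (FreeGroup.mk (p :: w))).norm := by
  have hp := ht.norm_pmPow_eq p
  induction w generalizing p with
  | nil =>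
    rw [lift_mk_cons, ← FreeGroup.one_eq_mk, map_one, mul_one, hp]
    simp
  | cons q w ih =>
    obtain ⟨hpq, hqw⟩ := FreeGroup.isReduced_cons_cons.1 hw
    have htail := ih hqw (ht.norm_pmPow_eq q)
    have hleft := cancelLen_le_letterLeftCancel (t := t) hpq
    have hright := cancelLen_le_letterLeftCancel_not (t := t) hpq
    have hmul := norm_mul_add_two_mul_cancelLen (pmPow p.2 (t p.1))
      (FreeGroup.lift t (FreeGroup.mk (q :: w)))
    rw [ht.cancelLen_lift_mk_cons hw, ← lift_mk_cons] at hmul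
    rw [List.map_cons, List.sum_cons]
    lia

theorem sum_remLen_lt_norm {α : Type*} [DecidableEq α] (ht : HasRemnant t)
    {f : α → Fin N} (hf : f.Injective) {j k : Fin N} (hj : j ∉ Set.range f)
    (hk : k ∉ Set.range f) (hjk : j ≠ k) (z : FreeGroup α) :
    (z.toWord.map fun p => remLen t (f p.1)).sum <
      ((t j)⁻¹ * FreeGroup.lift (t ∘ f) z * t k).norm := by
  have hword : FreeGroup.lift t
      (FreeGroup.mk ((j, false) :: (z.toWord.map (Prod.map f id) ++ [(k, true)]))) =
      (t j)⁻¹ * FreeGroup.lift (t ∘ f) z * t k := by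
    conv_rhs => rw [← z.mk_toWord]
    simp [FreeGroup.lift_mk, Function.comp_def, mul_assoc]
  have hle := ht.letterLeftCancel_add_sum_remLen_le_norm
    (isReduced_cons_map_append_singleton hf (a := (j, false)) (b := (k, true)) hj hk hjk
      (FreeGroup.isReduced_toWord (x := z)))
  have hpos := ht j
  rw [hword] at hle
  simp only [List.map_cons, List.map_append, List.map_map, List.sum_cons, List.sum_append,
    Function.comp_def (fun q : Fin N × Bool => remLen t q.1), Prod.map_fst] at hle
  lia

end HasRemnant

end Remnant

/-- Let `G` be the free group on `n` generators, `H` a free group of rank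
greater than one, `φ ψ : G → H` homomorphisms and `u v ∈ H`. If the `(n+2)`-tuple
`t = (φ(a_1), …, φ(a_n), u, v)` has remnant and `|Rem_t φ(a_i)| ≥ |ψ(a_i)|` for every `i`,
then there is no `z ∈ G` with `u = φ(z) * v * ψ(z)⁻¹`. -/
theorem no_doubly_twisted_conjugacy_of_remnant {n : ℕ} {β : Type} [DecidableEq β]
    [Nontrivial β]
    (φ ψ : FreeGroup (Fin n) →* FreeGroup β) (u v : FreeGroup β)
    (t : Fin (n + 2) → FreeGroup β)
    (ht : t = Fin.snoc (Fin.snoc (fun i : Fin n => φ (FreeGroup.of i)) u) v)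
    (hrem : HasRemnant t)
    (hlen : ∀ i : Fin n,
      FreeGroup.norm (ψ (FreeGroup.of i)) ≤ remLen t (i.castSucc.castSucc)) :
    ¬ ∃ z : FreeGroup (Fin n), u = φ z * v * (ψ z)⁻¹ := by
  rintro ⟨z, rfl⟩
  let gen : Fin n → Fin (n + 2) := fun i => i.castSucc.castSucc
  have hgen : gen.Injective := (Fin.castSucc_injective _).comp (Fin.castSucc_injective _)
  have hφ : FreeGroup.lift (t ∘ gen) = φ := by
    ext i
    simp [ht, gen]
  have hψ : (t (Fin.last n).castSucc)⁻¹ * FreeGroup.lift (t ∘ gen) z * t (Fin.last (n + 1)) =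
      ψ z := by
    rw [hφ, ht, Fin.snoc_castSucc, Fin.snoc_last, Fin.snoc_last]
    group
  have hlt := hrem.sum_remLen_lt_norm hgen (j := (Fin.last n).castSucc) (k := Fin.last (n + 1))
    (by simp [gen, Fin.castSucc_ne_last]) (by simp [gen, Fin.castSucc_ne_last])
    (Fin.castSucc_ne_last _) z
  rw [hψ] at hlt
  refine hlt.not_ge ?_
  calc (ψ z).norm ≤ (z.toWord.map fun p => (ψ (FreeGroup.of p.1)).norm).sum :=
        norm_map_le_sum_norm_map_of ψ z
    _ ≤ (z.toWord.map fun p => remLen t (gen p.1)).sum := List.sum_le_sum fun p _ => hlen p.1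
end

section
/- Let G be the free group on generators a_1,…,a_n, let φ : G → G be an endomorphism, and let u, v ∈ G. If the (n+2)-tuple t = (φ(a_1),…,φ(a_n), u, v) has remnant, then u and v are not singly-twisted conjugate with respect to φ; that is, there is no z ∈ G with u = φ(z)·v·z⁻¹. -/
/-!
For reduced words `x`, `y` of a free group, the Gromov product `(|x| + |y| - |x⁻¹ * y|) / 2` is the
length of their longest common prefix, hence satisfies the ultrametric inequality
`min (x, y) (y, z) ≤ (x, z)`. The cancellation in a product `x * y` is the Gromov product of `x⁻¹`
and `y`.

If a family `h` has remnant, then in the image of a reduced word under `a ↦ h a` every letter keeps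
an uncancelled piece: by the ultrametric inequality, a letter cannot cancel more of the image of the
following subword than it cancels of the image of that subword's first letter. So the induced
homomorphism does not decrease length. A solution of `u = φ z * v * z⁻¹` exhibits `z` as the image
`u⁻¹ * φ z * v` of a reduced word of length `|z| + 2`, which is absurd.
-/

section CommonPrefix

variable {α : Type*} [DecidableEq α]

/-- The length of the longest common prefix of two lists, used to measure cancellation between
reduced words. -/
def commonPrefixLength : List α → List α → ℕ
  | [], _ | _ :: _, [] => 0
  | a :: s, b :: t => if a = b then commonPrefixLength s t + 1 else 0

theorem commonPrefixLength_comm : ∀ s t : List α,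
    commonPrefixLength s t = commonPrefixLength t s
  | [], [] | [], _ :: _ | _ :: _, [] => rfl
  | a :: s, b :: t => by
    simp only [commonPrefixLength, commonPrefixLength_comm s t, eq_comm (a := a)]

theorem min_commonPrefixLength_le : ∀ r s t : List α,
    min (commonPrefixLength r s) (commonPrefixLength s t) ≤ commonPrefixLength r t
  | [], _, _ | _ :: _, [], _ | _ :: _, _ :: _, [] => by simp [commonPrefixLength]
  | a :: r, b :: s, c :: t => by
    have ih := min_commonPrefixLength_le r s t
    grind [commonPrefixLength]

end CommonPrefix

section GromovProduct

variable {β : Type*}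

theorem isReduced_invRev {s : List (β × Bool)} (hs : FreeGroup.IsReduced s) :
    FreeGroup.IsReduced (FreeGroup.invRev s) := by
  classical
  rw [FreeGroup.isReduced_iff_reduce_eq, FreeGroup.reduce_invRev, hs.reduce_eq]

theorem isReduced_invRev_append {s t : List (β × Bool)} (hs : FreeGroup.IsReduced s)
    (ht : FreeGroup.IsReduced t) (h : ∀ a ∈ s.head?, ∀ b ∈ t.head?, a ≠ b) :
    FreeGroup.IsReduced (FreeGroup.invRev s ++ t) := by
  refine List.isChain_append.mpr ⟨isReduced_invRev hs, ht, ?_⟩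
  rintro ⟨i, a⟩ ha ⟨j, b⟩ hb (rfl : i = j)
  have ha' : (i, !a) ∈ s.head? := by
    cases a <;> simpa [FreeGroup.invRev] using ha
  simpa using h (i, !a) ha' (i, b) hb

theorem inv_mk_cons_mul_mk_cons (a : β × Bool) (s t : List (β × Bool)) :
    (FreeGroup.mk (a :: s))⁻¹ * FreeGroup.mk (a :: t) = (FreeGroup.mk s)⁻¹ * FreeGroup.mk t := by
  have mk_cons (w : List (β × Bool)) : FreeGroup.mk (a :: w) = .mk [a] * .mk w := rfl
  rw [mk_cons s, mk_cons t]
  group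

variable [DecidableEq β]

theorem norm_mk_of_isReduced {s : List (β × Bool)} (hs : FreeGroup.IsReduced s) :
    FreeGroup.norm (FreeGroup.mk s) = s.length := by
  rw [FreeGroup.norm, FreeGroup.toWord_mk, hs.reduce_eq]

theorem norm_inv_mk_mul_mk_of_head?_ne {s t : List (β × Bool)} (hs : FreeGroup.IsReduced s)
    (ht : FreeGroup.IsReduced t) (h : ∀ a ∈ s.head?, ∀ b ∈ t.head?, a ≠ b) :
    FreeGroup.norm ((FreeGroup.mk s)⁻¹ * FreeGroup.mk t) = s.length + t.length := by
  rw [FreeGroup.inv_mk, FreeGroup.mul_mk, norm_mk_of_isReduced (isReduced_invRev_append hs ht h),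
    List.length_append, FreeGroup.invRev_length]

theorem norm_inv_mk_mul_mk_add : ∀ {s t : List (β × Bool)}, FreeGroup.IsReduced s →
    FreeGroup.IsReduced t →
      FreeGroup.norm ((FreeGroup.mk s)⁻¹ * FreeGroup.mk t) + 2 * commonPrefixLength s t =
        s.length + t.length
  | [], _, hs, ht | _ :: _, [], hs, ht => norm_inv_mk_mul_mk_of_head?_ne hs ht (by simp)
  | a :: s, b :: t, hs, ht => by
    rw [commonPrefixLength]
    split_ifs with hab
    · subst hab
      have ih := norm_inv_mk_mul_mk_add (hs.infix (List.suffix_cons a s).isInfix)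
        (ht.infix (List.suffix_cons a t).isInfix)
      rw [inv_mk_cons_mul_mk_cons, List.length_cons, List.length_cons]
      lia
    · exact norm_inv_mk_mul_mk_of_head?_ne hs ht (by simpa using hab)

/-- The Gromov product of two elements of a free group, based at `1`: the length of the longest
common prefix of their reduced words. The number of letters cancelled on either side of the product
`x * y` is `gromovProduct x⁻¹ y`. -/
def gromovProduct (x y : FreeGroup β) : ℕ := commonPrefixLength x.toWord y.toWord

theorem norm_inv_mul_add_two_mul_gromovProduct (x y : FreeGroup β) :
    FreeGroup.norm (x⁻¹ * y) + 2 * gromovProduct x y = FreeGroup.norm x + FreeGroup.norm y := by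
  have h := norm_inv_mk_mul_mk_add (FreeGroup.isReduced_toWord (x := x))
    (FreeGroup.isReduced_toWord (x := y))
  rwa [FreeGroup.mk_toWord, FreeGroup.mk_toWord] at h

theorem norm_mul_add_two_mul_gromovProduct (x y : FreeGroup β) :
    FreeGroup.norm (x * y) + 2 * gromovProduct x⁻¹ y = FreeGroup.norm x + FreeGroup.norm y := by
  simpa only [inv_inv, FreeGroup.norm_inv_eq] using norm_inv_mul_add_two_mul_gromovProduct x⁻¹ y

theorem gromovProduct_comm (x y : FreeGroup β) : gromovProduct x y = gromovProduct y x :=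
  commonPrefixLength_comm _ _

theorem min_gromovProduct_le (x y z : FreeGroup β) :
    min (gromovProduct x y) (gromovProduct y z) ≤ gromovProduct x z :=
  min_commonPrefixLength_le _ _ _

theorem gromovProduct_self_mul_add (x y : FreeGroup β) :
    gromovProduct x (x * y) + gromovProduct x⁻¹ y = FreeGroup.norm x := by
  have hxy := norm_mul_add_two_mul_gromovProduct x y
  have hy := norm_inv_mul_add_two_mul_gromovProduct x (x * y)
  rw [inv_mul_cancel_left] at hy
  lia

end GromovProduct

section FamilyRemnant

variable {κ β : Type*}

/-- The value of the letter `a` (a generator with a sign) under the homomorphism extending `h`. -/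
def letterImage {G : Type*} [Group G] (h : κ → G) (a : κ × Bool) : G :=
  cond a.2 (h a.1) (h a.1)⁻¹

theorem letterImage_inv {G : Type*} [Group G] (h : κ → G) (i : κ) (b : Bool) :
    (letterImage h (i, b))⁻¹ = letterImage h (i, !b) := by
  cases b <;> simp [letterImage]

theorem lift_mk_cons_s1 {G : Type*} [Group G] (h : κ → G) (a : κ × Bool) (w : List (κ × Bool)) :
    FreeGroup.lift h (.mk (a :: w)) = letterImage h a * FreeGroup.lift h (.mk w) := by
  simp only [FreeGroup.lift_mk, List.map_cons, List.prod_cons, letterImage]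

variable [DecidableEq β]

/-- Remnant for a family indexed by an arbitrary type: whenever `a * b * c` is a reduced word, a
piece of the image of `b` survives the cancellation against the images of `a` and `c`. Asking this
for each pair `a`, `c` amounts to asking it for the maximal cancellations on either side of `b`, so
that no maximum over a possibly infinite family has to be formed. -/
def HasFamilyRemnant (h : κ → FreeGroup β) : Prop :=
  ∀ a b c : κ × Bool, FreeGroup.IsReduced [a, b, c] →
    gromovProduct (letterImage h a)⁻¹ (letterImage h b) +
      gromovProduct (letterImage h b)⁻¹ (letterImage h c) < FreeGroup.norm (letterImage h b)

variable {h : κ → FreeGroup β}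

theorem HasFamilyRemnant.comp_injective (hh : HasFamilyRemnant h) {κ' : Type*} {f : κ' → κ}
    (hf : f.Injective) : HasFamilyRemnant (h ∘ f) := by
  intro a b c habc
  refine hh (f a.1, a.2) (f b.1, b.2) (f c.1, c.2) ?_
  simpa [FreeGroup.IsReduced, hf.eq_iff] using habc

/-- The term `gromovProduct (letterImage h a)⁻¹ (letterImage h b)` in the length bound lets the
induction absorb the cancellation against the preceding letter. -/
theorem HasFamilyRemnant.gromovProduct_le_and_lt_norm (hh : HasFamilyRemnant h) :
    ∀ {a b : κ × Bool} {w : List (κ × Bool)}, FreeGroup.IsReduced (a :: b :: w) →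
      gromovProduct (letterImage h a)⁻¹ (FreeGroup.lift h (.mk (b :: w))) ≤
          gromovProduct (letterImage h a)⁻¹ (letterImage h b) ∧
        gromovProduct (letterImage h a)⁻¹ (letterImage h b) + w.length <
          FreeGroup.norm (FreeGroup.lift h (.mk (b :: w)))
  | a, b, [], hab => by
    have hb := hh a b b (by simp_all [FreeGroup.IsReduced])
    have hone : FreeGroup.lift h (.mk []) = 1 := rfl
    rw [lift_mk_cons_s1, hone, mul_one, List.length_nil]
    lia
  | a, b, c :: w, habc => by
    obtain ⟨hcancel, hlength⟩ := hh.gromovProduct_le_and_lt_norm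
      (habc.infix (List.suffix_cons a (b :: c :: w)).isInfix)
    have hremnant := hh a b c (habc.infix ⟨[], w, rfl⟩)
    rw [lift_mk_cons_s1, List.length_cons]
    set x := letterImage h a
    set y := letterImage h b
    set z := FreeGroup.lift h (.mk (c :: w))
    have hsurvives : gromovProduct x⁻¹ y < gromovProduct y (y * z) := by
      have := gromovProduct_self_mul_add y z
      lia
    have hultra : min (gromovProduct x⁻¹ (y * z)) (gromovProduct y (y * z)) ≤
        gromovProduct x⁻¹ y := by
      rw [gromovProduct_comm y]
      exact min_gromovProduct_le x⁻¹ (y * z) y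
    have hnorm := norm_mul_add_two_mul_gromovProduct y z
    exact ⟨by lia, by lia⟩

theorem HasFamilyRemnant.norm_le_norm_lift [DecidableEq κ] (hh : HasFamilyRemnant h)
    (z : FreeGroup κ) : FreeGroup.norm z ≤ FreeGroup.norm (FreeGroup.lift h z) := by
  have hz := FreeGroup.isReduced_toWord (x := z)
  rw [← FreeGroup.mk_toWord (x := z), norm_mk_of_isReduced hz]
  cases hw : z.toWord with
  | nil => exact Nat.zero_le _
  | cons a w =>
    have haw : FreeGroup.IsReduced (a :: a :: w) :=
      FreeGroup.isReduced_cons_cons.mpr ⟨fun _ => rfl, hw ▸ hz⟩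
    have := (hh.gromovProduct_le_and_lt_norm haw).2
    rw [List.length_cons]
    lia

end FamilyRemnant

section TwistedConjugacy

theorem norm_of_inv_mul_map_mul_of {ι κ : Type*} [DecidableEq ι] [DecidableEq κ] {f : ι → κ}
    (hf : f.Injective) {j k : κ} (hj : j ∉ Set.range f) (hk : k ∉ Set.range f) (hjk : j ≠ k)
    (z : FreeGroup ι) :
    FreeGroup.norm ((FreeGroup.of j)⁻¹ * FreeGroup.map f z * FreeGroup.of k) =
      FreeGroup.norm z + 2 := by
  set w := z.toWord.map fun a => (f a.1, a.2)
  have hw : FreeGroup.IsReduced w := by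
    refine (List.isChain_map _).mpr (FreeGroup.isReduced_toWord.imp ?_)
    exact fun _ _ hab heq => hab (hf heq)
  have hwk : FreeGroup.IsReduced (w ++ [(k, true)]) := by
    refine List.isChain_append.mpr ⟨hw, FreeGroup.IsReduced.singleton, ?_⟩
    grind
  have hred : FreeGroup.IsReduced ((j, false) :: (w ++ [(k, true)])) := by
    refine List.isChain_cons.mpr ⟨?_, hwk⟩
    grind
  have hmk : (FreeGroup.of j)⁻¹ * FreeGroup.map f z * FreeGroup.of k =
      .mk ((j, false) :: (w ++ [(k, true)])) := by
    nth_rw 1 [← FreeGroup.mk_toWord (x := z)]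
    simp [FreeGroup.of, FreeGroup.invRev, w]
  rw [hmk, norm_mk_of_isReduced hred, FreeGroup.norm]
  simp [w]

theorem HasFamilyRemnant.norm_add_two_le {ι β : Type*} [DecidableEq ι] [DecidableEq β]
    {φ : FreeGroup ι →* FreeGroup β} {u v : FreeGroup β}
    (h : HasFamilyRemnant (Sum.elim (fun i => φ (FreeGroup.of i)) ![u, v])) (z : FreeGroup ι) :
    FreeGroup.norm z + 2 ≤ FreeGroup.norm (u⁻¹ * φ z * v) := by
  have hφ : (FreeGroup.lift (Sum.elim (fun i => φ (.of i)) ![u, v])).comp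
      (FreeGroup.map Sum.inl) = φ := by
    ext i
    simp
  have hlift := h.norm_le_norm_lift
    ((FreeGroup.of (.inr 0))⁻¹ * FreeGroup.map Sum.inl z * FreeGroup.of (.inr 1))
  rw [norm_of_inv_mul_map_mul_of Sum.inl_injective (by simp) (by simp) (by simp)] at hlift
  simpa [← MonoidHom.comp_apply, hφ] using hlift

theorem no_singly_twisted_conjugacy_of_remnant_general {ι : Type*} [DecidableEq ι]
    (φ : FreeGroup ι →* FreeGroup ι) (u v : FreeGroup ι)
    (hrem : HasFamilyRemnant (Sum.elim (fun i => φ (FreeGroup.of i)) ![u, v])) :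
    ¬ ∃ z : FreeGroup ι, u = φ z * v * z⁻¹ := by
  rintro ⟨z, hz⟩
  have hz' : u⁻¹ * φ z * v = z := by
    rw [hz]
    group
  have := hrem.norm_add_two_le z
  rw [hz'] at this
  lia

end TwistedConjugacy

section Tuple

variable {β : Type} [DecidableEq β] {N : ℕ}

theorem cancelLen_eq_gromovProduct (x y : FreeGroup β) :
    cancelLen x y = gromovProduct x⁻¹ y := by
  have := norm_mul_add_two_mul_gromovProduct x y
  rw [cancelLen]
  lia

theorem pmPow_eq_letterImage {κ : Type*} (h : κ → FreeGroup β) (a : κ × Bool) :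
    pmPow a.2 (h a.1) = letterImage h a := by
  simp only [pmPow, letterImage, cond_eq_ite]

theorem gromovProduct_le_leftCancel (t : Fin N → FreeGroup β) {a : Fin N × Bool} {i : Fin N}
    (h : a ≠ (i, false)) : gromovProduct (letterImage t a)⁻¹ (t i) ≤ leftCancel t i := by
  refine le_trans (le_of_eq ?_) (Finset.le_sup (Finset.mem_univ a))
  rw [if_neg (mt Prod.ext_iff.mpr h), cancelLen_eq_gromovProduct, pmPow_eq_letterImage]

theorem gromovProduct_le_rightCancel (t : Fin N → FreeGroup β) {a : Fin N × Bool} {i : Fin N}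
    (h : a ≠ (i, false)) : gromovProduct (t i)⁻¹ (letterImage t a) ≤ rightCancel t i := by
  refine le_trans (le_of_eq ?_) (Finset.le_sup (Finset.mem_univ a))
  rw [if_neg (mt Prod.ext_iff.mpr h), cancelLen_eq_gromovProduct, pmPow_eq_letterImage]

theorem HasRemnant.hasFamilyRemnant {t : Fin N → FreeGroup β} (ht : HasRemnant t) :
    HasFamilyRemnant t := by
  rintro ⟨i, a⟩ ⟨j, b⟩ ⟨k, c⟩ hred
  have hj : 1 ≤ FreeGroup.norm (t j) - leftCancel t j - rightCancel t j := ht j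
  obtain ⟨hab, hbc⟩ : (i = j → a = b) ∧ (j = k → b = c) := by
    simpa [FreeGroup.IsReduced] using hred
  cases b with
  | true =>
    have hleft := gromovProduct_le_leftCancel t (a := (i, a)) (i := j) (by grind)
    have hright := gromovProduct_le_rightCancel t (a := (k, c)) (i := j) (by grind)
    simp only [letterImage, cond_true] at *
    lia
  | false =>
    -- Inverting the product exchanges the two sides of `t j`.
    have hleft := gromovProduct_le_leftCancel t (a := (k, !c)) (i := j) (by grind)
    have hright := gromovProduct_le_rightCancel t (a := (i, !a)) (i := j) (by grind)
    rw [← letterImage_inv] at hleft hright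
    rw [gromovProduct_comm (letterImage t (i, a))⁻¹]
    simp only [letterImage, cond_false, inv_inv, FreeGroup.norm_inv_eq] at *
    rw [gromovProduct_comm] at hleft
    lia

theorem append_pair_eq_snoc_snoc {α : Type*} (f : Fin N → α) (u v : α) :
    Fin.append f ![u, v] = Fin.snoc (Fin.snoc f u : Fin (N + 1) → α) v := by
  have hpair : ![u, v] = Fin.snoc (α := fun _ => α) ![u] v := by simp
  rw [hpair, Fin.append_snoc, Fin.append_right_eq_snoc, Matrix.cons_val_zero]

theorem HasRemnant.hasFamilyRemnant_sumElim {m n : ℕ} {f : Fin m → FreeGroup β}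
    {g : Fin n → FreeGroup β} (h : HasRemnant (Fin.append f g)) :
    HasFamilyRemnant (Sum.elim f g) :=
  Fin.append_comp_sumElim (xs := f) (ys := g) ▸
    h.hasFamilyRemnant.comp_injective finSumFinEquiv.injective

end Tuple

/-- Let `G` be the free group on `n` generators, `φ : G → G` an
endomorphism and `u v ∈ G`. If the `(n+2)`-tuple `t = (φ(a_1), …, φ(a_n), u, v)` has
remnant, then there is no `z ∈ G` with `u = φ(z) * v * z⁻¹`. -/
theorem no_singly_twisted_conjugacy_of_remnant {n : ℕ}
    (φ : FreeGroup (Fin n) →* FreeGroup (Fin n)) (u v : FreeGroup (Fin n))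
    (t : Fin (n + 2) → FreeGroup (Fin n))
    (ht : t = Fin.snoc (Fin.snoc (fun i : Fin n => φ (FreeGroup.of i)) u) v)
    (hrem : HasRemnant t) :
    ¬ ∃ z : FreeGroup (Fin n), u = φ z * v * z⁻¹ := by
  rw [ht, ← append_pair_eq_snoc_snoc] at hrem
  exact no_singly_twisted_conjugacy_of_remnant_general φ u v hrem.hasFamilyRemnant_sumElim
end

section
/- Let G be the free group on generators a_1,…,a_n, let H be a free group of rank greater than 1, and let ψ : G → H be any group homomorphism. Then the set S = {(φ, u, v) ∈ H^n × H × H : there is no z ∈ G with u = φ(z)·v·ψ(z)⁻¹} (where the n-tuple φ is identified with the homomorphism G → H sending a_i to its i-th coordinate) is generic: lim_{p→∞} |S ∩ (H_p)^{n+2}| / |H_p|^{n+2} = 1. -/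
/-!
If the letters `φ(a_i)^{±1}` have pairwise distinct prefixes of length `L` and are long compared
with `L`, then little cancels in `φ(z)`, so `|φ(z)|` is at least a large multiple of `|z|`. Since
`|ψ(z)|` is at most a fixed multiple of `|z|`, an equation `u = φ(z) v ψ(z)⁻¹` with `|u|, |v| ≤ p`
and `L` proportional to `p` then bounds `|z|` independently of `p`. Each of the finitely many
remaining `z` determines `u` from `φ` and `v`, and each of the finitely many ways in which `φ` can
violate the prefix condition determines `L` letters of one coordinate from the remaining data.
Because balls at least double when the radius grows by one, every such event has density at most
`2⁻ᴸ`.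
-/

/-- The number of elements of the free group of rank `n` of word length at most `p`,
i.e. `|H_p|`. -/
noncomputable def ballCount (n p : ℕ) : ℕ :=
  Nat.card {w : FreeGroup (Fin n) // FreeGroup.norm w ≤ p}

namespace TwistedConjugacy

open FreeGroup hiding norm
open Filter Topology

variable {α β : Type*}

/-! ### Cancellation in products -/

theorem exists_append_isReduced_of_cancel {u v : List (α × Bool)} (hu : IsReduced u)
    (hv : IsReduced v) :
    ∃ u' c v', u = u' ++ c ∧ v = invRev c ++ v' ∧ IsReduced (u' ++ v') := by
  induction u using List.reverseRecOn generalizing v with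
  | nil => exact ⟨[], [], v, by simp, by simp, by simpa using hv⟩
  | append_singleton u a ih =>
    cases v with
    | nil => exact ⟨u ++ [a], [], [], by simp, by simp, by simpa using hu⟩
    | cons b v =>
      by_cases hab : a.1 = b.1 → a.2 = b.2
      · have hav : IsReduced ([a] ++ b :: v) := isReduced_cons_cons.2 ⟨hab, hv⟩
        exact ⟨u ++ [a], [], b :: v, by simp, by simp, hu.append_overlap hav (by simp)⟩
      · push Not at hab
        obtain ⟨u', c, v', hu', hv', huv⟩ := ih
          (hu.infix (List.prefix_append u [a]).isInfix)
          (hv.infix (List.suffix_cons b v).isInfix)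
        have hb : b = (a.1, !a.2) := Prod.ext hab.1.symm (Bool.eq_not.2 hab.2.symm)
        exact ⟨u', c ++ [a], v', by simp [hu'], by simp [hv', hb, invRev], huv⟩

theorem exists_isReduced_cons [Nontrivial α] {w : List (α × Bool)} (hw : IsReduced w) :
    ∃ j, ∀ c, IsReduced ((j, c) :: w) := by
  cases w with
  | nil => exact (exists_pair_ne α).imp fun _ _ _ => IsReduced.singleton
  | cons a w =>
    obtain ⟨j, hj⟩ := exists_ne a.1
    exact ⟨j, fun c => isReduced_cons_cons.2 ⟨fun h => absurd h hj, hw⟩⟩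

section Norm

variable [DecidableEq α]

theorem exists_toWord_mul (x y : FreeGroup α) :
    ∃ u c v, x.toWord = u ++ c ∧ y.toWord = invRev c ++ v ∧ (x * y).toWord = u ++ v := by
  obtain ⟨u, c, v, hx, hy, huv⟩ :=
    exists_append_isReduced_of_cancel (isReduced_toWord (x := x)) (isReduced_toWord (x := y))
  have hxy : x * y = mk (u ++ v) := by
    rw [← mk_toWord (x := x), ← mk_toWord (x := y), hx, hy]
    simp only [← mul_mk, ← inv_mk]
    group
  exact ⟨u, c, v, hx, hy, by rw [hxy, toWord_mk, huv.reduce_eq]⟩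

theorem take_toWord_mul_and_norm_mul {L : ℕ} {x y : FreeGroup α} (hx : 2 * L ≤ x.norm)
    (hne : x⁻¹.toWord.take L ≠ y.toWord.take L) :
    (x * y).toWord.take L = x.toWord.take L ∧ x.norm + y.norm ≤ (x * y).norm + 2 * L := by
  obtain ⟨u, c, v, hu, hv, huv⟩ := exists_toWord_mul x y
  have hc : c.length < L := by
    by_contra! hc
    refine hne ?_
    rw [toWord_inv, hu, hv, invRev_append, List.take_append_of_le_length (by simpa using hc),
      List.take_append_of_le_length (by simpa using hc)]
  simp only [FreeGroup.norm, hu, hv, huv, List.length_append, invRev_length] at hx ⊢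
  refine ⟨?_, by omega⟩
  rw [List.take_append_of_le_length (by omega), List.take_append_of_le_length (by omega)]

theorem toWord_mk_drop (x : FreeGroup α) (L : ℕ) :
    (mk (x.toWord.drop L)).toWord = x.toWord.drop L := by
  rw [toWord_mk,
    (isReduced_toWord.infix (List.drop_suffix L x.toWord).isInfix).reduce_eq]

theorem take_toWord_inv {x : FreeGroup α} {L : ℕ} (hx : 2 * L ≤ x.norm) :
    x⁻¹.toWord.take L = (invRev (x.toWord.drop L)).take L := by
  rw [FreeGroup.norm] at hx
  conv_lhs => rw [toWord_inv, ← List.take_append_drop L x.toWord, invRev_append]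
  rw [List.take_append_of_le_length (by simp; omega)]

theorem eq_of_take_eq_of_drop_eq {x y : FreeGroup α} {L : ℕ}
    (htake : x.toWord.take L = y.toWord.take L) (hdrop : x.toWord.drop L = y.toWord.drop L) :
    x = y :=
  toWord_injective <| by
    rw [← List.take_append_drop L x.toWord, htake, hdrop, List.take_append_drop]

/-! ### Tuples with small cancellation -/

/-- The image of the letter `a`, a generator or the inverse of one, under the homomorphism given
by `f` on the generators. -/
def letterValue {G : Type*} [Group G] (f : β → G) (a : β × Bool) : G :=
  cond a.2 (f a.1) (f a.1)⁻¹

section LetterValue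

variable {G : Type*} [Group G]

theorem lift_mk_cons (f : β → G) (a : β × Bool) (w : List (β × Bool)) :
    lift f (mk (a :: w)) = letterValue f a * lift f (mk w) := by
  simp [letterValue]

theorem letterValue_inv (f : β → G) (a : β × Bool) :
    (letterValue f a)⁻¹ = letterValue f (a.1, !a.2) := by
  rcases a with ⟨i, _ | _⟩ <;> simp [letterValue]

theorem letterValue_eq_iff {f g : β → G} {a : β × Bool} :
    letterValue f a = letterValue g a ↔ f a.1 = g a.1 := by
  rcases a with ⟨i, _ | _⟩ <;> simp [letterValue]

end LetterValue

theorem norm_letterValue (f : β → FreeGroup α) (a : β × Bool) :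
    (letterValue f a).norm = (f a.1).norm := by
  rcases a with ⟨i, _ | _⟩ <;> simp [letterValue]

theorem norm_lift_mk_le {f : β → FreeGroup α} {C : ℕ} (hf : ∀ i, (f i).norm ≤ C)
    (w : List (β × Bool)) : (lift f (mk w)).norm ≤ C * w.length := by
  induction w with
  | nil => simp
  | cons a w ih =>
    calc (lift f (mk (a :: w))).norm
        ≤ (letterValue f a).norm + (lift f (mk w)).norm := by
          rw [lift_mk_cons]; exact norm_mul_le _ _
      _ ≤ C + C * w.length := add_le_add (norm_letterValue f a ▸ hf a.1) ih
      _ = C * (a :: w).length := by rw [List.length_cons]; ring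

theorem exists_norm_map_le [Finite β] [DecidableEq β] (ψ : FreeGroup β →* FreeGroup α) :
    ∃ C, ∀ z, (ψ z).norm ≤ C * z.norm := by
  obtain ⟨C, hC⟩ := Finite.exists_le fun i => (ψ (of i)).norm
  refine ⟨C, fun z => ?_⟩
  have hz : ψ z = lift (fun i => ψ (of i)) (mk z.toWord) := by
    rw [mk_toWord]
    exact DFunLike.congr_fun (lift.apply_symm_apply ψ).symm z
  exact hz ▸ norm_lift_mk_le hC z.toWord

/-- The tuple `f` is such that the products of its entries and their inverses along a reduced word
have little cancellation: these entries and inverses have pairwise distinct prefixes of length `L`,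
so fewer than `L` letters cancel on either side of a multiplication, and at least `K` letters of
each factor survive. -/
structure HasSmallCancellation (K L : ℕ) (f : β → FreeGroup α) : Prop where
  le_norm : ∀ i, K + 2 * L ≤ (f i).norm
  injective_take : Function.Injective fun a => (letterValue f a).toWord.take L

namespace HasSmallCancellation

variable {K L : ℕ} {f : β → FreeGroup α}

theorem take_and_norm_lift_mk_cons (hf : HasSmallCancellation K L f) {a : β × Bool}
    {w : List (β × Bool)} (hw : IsReduced (a :: w)) :
    (lift f (FreeGroup.mk (a :: w))).toWord.take L = (letterValue f a).toWord.take L ∧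
      K * (w.length + 1) ≤ (lift f (FreeGroup.mk (a :: w))).norm := by
  have ha : K + 2 * L ≤ (letterValue f a).norm := norm_letterValue f a ▸ hf.le_norm a.1
  induction w generalizing a with
  | nil =>
    have hlift : lift f (FreeGroup.mk [a]) = letterValue f a := by simp [letterValue]
    exact ⟨by rw [hlift], by rw [hlift, List.length_nil]; omega⟩
  | cons b w ih =>
    rw [isReduced_cons_cons] at hw
    obtain ⟨htake, hnorm⟩ := ih hw.2 (norm_letterValue f b ▸ hf.le_norm b.1)
    have hne : (letterValue f a)⁻¹.toWord.take L ≠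
        (lift f (FreeGroup.mk (b :: w))).toWord.take L := by
      rw [htake, letterValue_inv]
      refine hf.injective_take.ne ?_
      rintro rfl
      simp at hw
    obtain ⟨hmul, hlength⟩ := take_toWord_mul_and_norm_mul (by omega) hne
    rw [lift_mk_cons f a]
    refine ⟨hmul, ?_⟩
    rw [List.length_cons, mul_add_one]
    omega

variable [DecidableEq β]

theorem mul_norm_le_norm_lift (hf : HasSmallCancellation K L f) (z : FreeGroup β) :
    K * z.norm ≤ (lift f z).norm := by
  obtain ⟨w, hw, rfl⟩ : ∃ w, IsReduced w ∧ FreeGroup.mk w = z :=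
    ⟨z.toWord, isReduced_toWord, mk_toWord⟩
  rw [FreeGroup.norm, toWord_mk, hw.reduce_eq]
  cases w with
  | nil => simp
  | cons a w => exact (hf.take_and_norm_lift_mk_cons hw).2

theorem norm_le_of_eq_lift_mul {C D M p : ℕ} (hL : 0 < L)
    (hf : HasSmallCancellation (C + L) L f) {z : FreeGroup β} {u v t : FreeGroup α}
    (hu : u.norm ≤ p) (hv : v.norm ≤ p) (ht : t.norm ≤ C * z.norm + D)
    (hM : 2 * p + D ≤ L * M) (h : u = lift f z * v * t⁻¹) : z.norm ≤ M := by
  have hlift : lift f z = u * t * v⁻¹ := by rw [h]; group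
  have hupper : (lift f z).norm ≤ u.norm + t.norm + v.norm := by
    calc (lift f z).norm ≤ (u * t).norm + v⁻¹.norm := hlift ▸ norm_mul_le _ _
      _ ≤ u.norm + t.norm + v.norm := by
        rw [norm_inv_eq]; exact Nat.add_le_add_right (norm_mul_le u t) _
  have hlower := hf.mul_norm_le_norm_lift z
  rw [add_mul] at hlower
  exact Nat.le_of_mul_le_mul_left (by omega : L * z.norm ≤ L * M) hL

end HasSmallCancellation

/-! ### Balls -/

section WordBall

variable [Finite α]

theorem finite_setOf_norm_le (p : ℕ) : {w : FreeGroup α | w.norm ≤ p}.Finite :=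
  (List.finite_length_le (α × Bool) p).preimage toWord_injective.injOn

variable (α) in
/-- The ball `H_p` of radius `p` in the free group on `α`, for the word length. -/
noncomputable def wordBall (p : ℕ) : Finset (FreeGroup α) :=
  (finite_setOf_norm_le p).toFinset

@[simp]
theorem mem_wordBall {p : ℕ} {w : FreeGroup α} : w ∈ wordBall α p ↔ w.norm ≤ p := by
  simp [wordBall]

variable (α) in
theorem card_wordBall_pos (p : ℕ) : 0 < (wordBall α p).card :=
  Finset.card_pos.2 ⟨1, by simp⟩

variable (α) in
theorem natCard_norm_le (p : ℕ) :
    Nat.card {w : FreeGroup α // w.norm ≤ p} = (wordBall α p).card := by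
  simp [← Nat.card_eq_finsetCard]

variable [Nontrivial α]

variable (α) in
theorem two_mul_card_wordBall_le (p : ℕ) :
    2 * (wordBall α p).card ≤ (wordBall α (p + 1)).card := by
  choose j hj using fun x : FreeGroup α => exists_isReduced_cons (isReduced_toWord (x := x))
  let extend (x : Bool × FreeGroup α) : FreeGroup α := mk ((j x.2, x.1) :: x.2.toWord)
  have toWord_extend (x) : (extend x).toWord = (j x.2, x.1) :: x.2.toWord := by
    rw [toWord_mk, (hj x.2 x.1).reduce_eq]
  have hcard : (Finset.univ ×ˢ wordBall α p : Finset (Bool × FreeGroup α)).card ≤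
      (wordBall α (p + 1)).card := by
    refine Finset.card_le_card_of_injOn extend (fun x hx => ?_) fun x _ y _ hxy => ?_
    · simpa [FreeGroup.norm, toWord_extend] using hx
    · have hword := congrArg toWord hxy
      rw [toWord_extend, toWord_extend, List.cons.injEq, Prod.mk.injEq] at hword
      exact Prod.ext hword.1.2 (toWord_injective hword.2)
  simpa using hcard

theorem two_pow_mul_card_wordBall_sub_le {L p : ℕ} (hL : L ≤ p) :
    2 ^ L * (wordBall α (p - L)).card ≤ (wordBall α p).card := by
  obtain ⟨q, rfl⟩ := Nat.exists_eq_add_of_le' hL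
  rw [Nat.add_sub_cancel]
  clear hL
  induction L with
  | zero => simp
  | succ L ih =>
    calc 2 ^ (L + 1) * (wordBall α q).card
        = 2 * (2 ^ L * (wordBall α q).card) := by ring
      _ ≤ 2 * (wordBall α (q + L)).card := Nat.mul_le_mul_left 2 ih
      _ ≤ (wordBall α (q + L + 1)).card := two_mul_card_wordBall_le α (q + L)

end WordBall

end Norm

/-! ### Counting -/

section Counting

theorem mul_card_biUnion_le {ι γ : Type*} [DecidableEq γ] {s : Finset ι} {t : ι → Finset γ}
    {k n : ℕ} (h : ∀ i ∈ s, k * (t i).card ≤ n) : k * (s.biUnion t).card ≤ s.card * n :=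
  calc k * (s.biUnion t).card ≤ k * ∑ i ∈ s, (t i).card :=
        Nat.mul_le_mul_left k Finset.card_biUnion_le
    _ = ∑ i ∈ s, k * (t i).card := Finset.mul_sum s _ k
    _ ≤ s.card * n := Finset.sum_le_card_nsmul s _ n h

theorem mul_card_le_pow_of_determined {γ δ : Type*} [Fintype β] {B : Finset γ} {C : Finset δ}
    {k : ℕ} (hk : k * C.card ≤ B.card) {E : Finset (β → γ)} (hE : ∀ f ∈ E, ∀ j, f j ∈ B)
    (i : β) (g : (β → γ) → δ) (hg : ∀ f ∈ E, g f ∈ C)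
    (hdet : ∀ f ∈ E, ∀ f' ∈ E, (∀ j ≠ i, f j = f' j) → g f = g f' → f i = f' i) :
    k * E.card ≤ B.card ^ Fintype.card β := by
  classical
  have hcard : E.card ≤ (C ×ˢ Fintype.piFinset fun _ : {j // j ≠ i} => B).card := by
    refine Finset.card_le_card_of_injOn (fun f => (g f, fun j => f j)) (fun f hf => ?_)
      fun f hf f' hf' hff' => ?_
    · simpa using ⟨hg f hf, fun j _ => hE f hf j⟩
    · obtain ⟨hgg, hrest⟩ := Prod.ext_iff.1 hff'
      have hne (j) (hj : j ≠ i) : f j = f' j := congrFun hrest ⟨j, hj⟩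
      funext j
      by_cases hj : j = i
      · exact hj ▸ hdet f hf f' hf' hne hgg
      · exact hne j hj
  have hcompl : Fintype.card {j // j ≠ i} = Fintype.card β - 1 := Set.card_ne_eq i
  rw [Finset.card_product, Fintype.card_piFinset, Finset.prod_const, Finset.card_univ,
    hcompl] at hcard
  calc k * E.card ≤ k * (C.card * B.card ^ (Fintype.card β - 1)) := Nat.mul_le_mul_left k hcard
    _ = k * C.card * B.card ^ (Fintype.card β - 1) := (mul_assoc _ _ _).symm
    _ ≤ B.card * B.card ^ (Fintype.card β - 1) := Nat.mul_le_mul_right _ hk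
    _ = B.card ^ Fintype.card β := mul_pow_sub_one (Fintype.card_pos_iff.2 ⟨i⟩).ne' _

theorem card_filter_eq_apply_le {ι κ μ : Type*} [DecidableEq κ] (s : Finset ι) (t : Finset κ)
    (r : Finset μ) (h : ι → μ → κ) :
    {x ∈ s ×ˢ t ×ˢ r | x.2.1 = h x.1 x.2.2}.card ≤ s.card * r.card := by
  rw [← Finset.card_product]
  refine Finset.card_le_card_of_injOn (fun x => (x.1, x.2.2)) (fun x hx => ?_)
    fun x hx y hy hxy => ?_
  · simp only [Finset.coe_filter, Set.mem_ofPred_eq, Finset.mem_product] at hx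
    exact Finset.mem_coe.2 (Finset.mem_product.2 ⟨hx.1.1, hx.1.2.2⟩)
  · obtain ⟨h₁, h₂⟩ := Prod.ext_iff.1 hxy
    dsimp only at h₁ h₂
    refine Prod.ext h₁ (Prod.ext ?_ h₂)
    rw [(Finset.mem_filter.1 hx).2, (Finset.mem_filter.1 hy).2, h₁, h₂]

theorem tendsto_div_nhds_one_of_mul_le {a b N k : ℕ → ℕ} {M : ℕ} (hab : ∀ p, a p + b p = N p)
    (hN : ∀ p, 0 < N p) (hk : Tendsto k atTop atTop)
    (hb : ∀ᶠ p in atTop, k p * b p ≤ M * N p) :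
    Tendsto (fun p => (a p : ℝ) / N p) atTop (𝓝 1) := by
  have hlim : Tendsto (fun p => (M : ℝ) / k p) atTop (𝓝 0) :=
    tendsto_const_nhds.div_atTop (tendsto_natCast_atTop_atTop.comp hk)
  have hb₀ : Tendsto (fun p => (b p : ℝ) / N p) atTop (𝓝 0) := by
    refine squeeze_zero' (.of_forall fun p => by positivity) ?_ hlim
    filter_upwards [hb, hk.eventually_gt_atTop 0] with p hp hkp
    have hNp := hN p
    rw [div_le_div_iff₀ (by exact_mod_cast hNp) (by exact_mod_cast hkp), mul_comm]
    exact_mod_cast hp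
  refine (sub_zero (1 : ℝ) ▸ hb₀.const_sub 1).congr fun p => ?_
  have hNp : (N p : ℝ) ≠ 0 := by exact_mod_cast (hN p).ne'
  rw [one_sub_div hNp, ← hab p]
  push_cast
  rw [add_sub_cancel_right]

end Counting

/-! ### Density of the exceptional sets -/

/-- `u` and `v` are doubly twisted conjugate with respect to the maps `φ` and `ψ`, which need not
be homomorphisms. -/
def DoublyTwistedConjugate {G H : Type*} [Group H] (φ ψ : G → H) (u v : H) : Prop :=
  ∃ z, u = φ z * v * (ψ z)⁻¹

section Density

variable [DecidableEq α] [Finite α] [Fintype β] [DecidableEq β]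

variable (α β) in
/-- The tuples in `(H_p)^β`, where `H` is the free group on `α`; they stand for homomorphisms
from the free group on `β` to `H`. -/
noncomputable def tupleBall (p : ℕ) : Finset (β → FreeGroup α) :=
  Fintype.piFinset fun _ => wordBall α p

@[simp]
theorem mem_tupleBall {p : ℕ} {f : β → FreeGroup α} :
    f ∈ tupleBall α β p ↔ ∀ i, (f i).norm ≤ p := by
  simp [tupleBall]

variable (α β) in
theorem card_tupleBall (p : ℕ) :
    (tupleBall α β p).card = (wordBall α p).card ^ Fintype.card β := by
  simp [tupleBall]

open Classical in
/-- The triples `(φ, u, v)` in `(H_p)^β × H_p × H_p` for which `u` and `v` are doubly twisted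
conjugate with respect to `φ` and `ψ`. -/
noncomputable def conjugateTriples (ψ : FreeGroup β → FreeGroup α) (p : ℕ) :
    Finset ((β → FreeGroup α) × FreeGroup α × FreeGroup α) :=
  {x ∈ tupleBall α β p ×ˢ wordBall α p ×ˢ wordBall α p |
    DoublyTwistedConjugate (lift x.1) ψ x.2.1 x.2.2}

theorem natCard_not_conjugate_add_card_conjugateTriples (ψ : FreeGroup β → FreeGroup α) (p : ℕ) :
    Nat.card {x : (β → FreeGroup α) × FreeGroup α × FreeGroup α //
        ¬ DoublyTwistedConjugate (lift x.1) ψ x.2.1 x.2.2 ∧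
        (∀ i, (x.1 i).norm ≤ p) ∧ x.2.1.norm ≤ p ∧ x.2.2.norm ≤ p} +
      (conjugateTriples ψ p).card = (wordBall α p).card ^ (Fintype.card β + 2) := by
  classical
  have htotal : (tupleBall α β p ×ˢ wordBall α p ×ˢ wordBall α p).card =
      (wordBall α p).card ^ (Fintype.card β + 2) := by
    rw [Finset.card_product, Finset.card_product, card_tupleBall]
    ring
  have hcount : Nat.card {x : (β → FreeGroup α) × FreeGroup α × FreeGroup α //
        ¬ DoublyTwistedConjugate (lift x.1) ψ x.2.1 x.2.2 ∧
        (∀ i, (x.1 i).norm ≤ p) ∧ x.2.1.norm ≤ p ∧ x.2.2.norm ≤ p} =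
      {x ∈ tupleBall α β p ×ˢ wordBall α p ×ˢ wordBall α p |
        ¬ DoublyTwistedConjugate (lift x.1) ψ x.2.1 x.2.2}.card := by
    rw [← Nat.card_eq_finsetCard]
    refine Nat.card_congr (Equiv.subtypeEquivRight fun x => ?_)
    simp only [Finset.mem_filter, Finset.mem_product, mem_tupleBall, mem_wordBall]
    tauto
  rw [hcount, add_comm, ← htotal]
  exact Finset.card_filter_add_card_filter_not _

variable [Nontrivial α] {L p : ℕ}

theorem two_pow_mul_card_norm_lt_le {r : ℕ} (hr : r + L ≤ p) (i : β) :
    2 ^ L * {f ∈ tupleBall α β p | (f i).norm < r}.card ≤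
      (wordBall α p).card ^ Fintype.card β := by
  refine mul_card_le_pow_of_determined (two_pow_mul_card_wordBall_sub_le (by omega))
    (fun f hf j => ?_) i (fun f => f i) (fun f hf => ?_) fun _ _ _ _ _ h => h
  · exact mem_wordBall.2 (mem_tupleBall.1 (Finset.mem_filter.1 hf).1 j)
  · have hlt := (Finset.mem_filter.1 hf).2
    exact mem_wordBall.2 (by omega)

theorem two_pow_mul_card_take_eq_le (hL : L ≤ p) {a b : β × Bool} (hab : a ≠ b) :
    2 ^ L * {f ∈ tupleBall α β p | 2 * L ≤ (f b.1).norm ∧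
        (letterValue f a).toWord.take L = (letterValue f b).toWord.take L}.card ≤
      (wordBall α p).card ^ Fintype.card β := by
  refine mul_card_le_pow_of_determined (two_pow_mul_card_wordBall_sub_le hL) (fun f hf j => ?_)
    b.1 (fun f => mk ((letterValue f b).toWord.drop L)) (fun f hf => ?_)
    fun f hf f' hf' hne hdrop => ?_
  · exact mem_wordBall.2 (mem_tupleBall.1 (Finset.mem_filter.1 hf).1 j)
  · have hle := mem_tupleBall.1 (Finset.mem_filter.1 hf).1 b.1
    rw [← norm_letterValue f b, FreeGroup.norm] at hle
    rw [mem_wordBall, FreeGroup.norm, toWord_mk_drop, List.length_drop]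
    omega
  · obtain ⟨-, hlong, htake⟩ := Finset.mem_filter.1 hf
    obtain ⟨-, hlong', htake'⟩ := Finset.mem_filter.1 hf'
    replace hdrop := congrArg toWord hdrop
    rw [toWord_mk_drop, toWord_mk_drop] at hdrop
    refine letterValue_eq_iff.1 (eq_of_take_eq_of_drop_eq ?_ hdrop)
    rw [← htake, ← htake']
    by_cases hgen : a.1 = b.1
    · -- Here `a` is the inverse letter of `b`, so the prefix is mirrored at the end of the word.
      have ha : a = (b.1, !b.2) :=
        Prod.ext hgen (Bool.eq_not.2 fun h => hab (Prod.ext hgen h))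
      rw [← norm_letterValue _ b] at hlong hlong'
      rw [ha, ← letterValue_inv, ← letterValue_inv, take_toWord_inv hlong, take_toWord_inv hlong',
        hdrop]
    · rw [letterValue_eq_iff.2 (hne a.1 hgen)]

open Classical in
theorem two_pow_mul_card_not_hasSmallCancellation_le {K : ℕ} (hp : K + 3 * L ≤ p) :
    2 ^ L * {f ∈ tupleBall α β p | ¬ HasSmallCancellation K L f}.card ≤
      (Fintype.card β + (Finset.univ : Finset (β × Bool)).offDiag.card) *
        (wordBall α p).card ^ Fintype.card β := by
  let short (i : β) := {f ∈ tupleBall α β p | (f i).norm < K + 2 * L}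
  let coincide (ab : (β × Bool) × (β × Bool)) := {f ∈ tupleBall α β p |
    2 * L ≤ (f ab.2.1).norm ∧
      (letterValue f ab.1).toWord.take L = (letterValue f ab.2).toWord.take L}
  have hsub : {f ∈ tupleBall α β p | ¬ HasSmallCancellation K L f} ⊆
      Finset.univ.biUnion short ∪ Finset.univ.offDiag.biUnion coincide := by
    intro f hf
    obtain ⟨hball, hnot⟩ := Finset.mem_filter.1 hf
    by_contra! hmem
    simp only [short, coincide, Finset.mem_union, Finset.mem_biUnion, Finset.mem_filter, hball,
      Finset.mem_univ, Finset.mem_offDiag, true_and, not_or, not_exists, not_and, not_lt] at hmem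
    refine hnot ⟨hmem.1, fun a b h => by_contra fun hab => ?_⟩
    exact hmem.2 (a, b) hab ((Nat.le_add_left _ K).trans (hmem.1 b.1)) h
  calc _ ≤ 2 ^ L * ((Finset.univ.biUnion short).card +
          (Finset.univ.offDiag.biUnion coincide).card) :=
        Nat.mul_le_mul_left _ ((Finset.card_le_card hsub).trans (Finset.card_union_le _ _))
    _ ≤ _ := by
        rw [mul_add, add_mul]
        exact add_le_add
          (mul_card_biUnion_le fun i _ => two_pow_mul_card_norm_lt_le (by omega) i)
          (mul_card_biUnion_le fun ab hab => two_pow_mul_card_take_eq_le (by omega)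
            (Finset.mem_offDiag.1 hab).2.2)

theorem two_pow_mul_card_eq_lift_mul_le (hL : L ≤ p) (ψ : FreeGroup β → FreeGroup α)
    (z : FreeGroup β) :
    2 ^ L * {x ∈ tupleBall α β p ×ˢ wordBall α p ×ˢ wordBall α p |
        x.2.1 = lift x.1 z * x.2.2 * (ψ z)⁻¹}.card ≤
      (wordBall α p).card ^ (Fintype.card β + 2) := by
  have hpow : 2 ^ L ≤ (wordBall α p).card :=
    (Nat.le_mul_of_pos_right _ (card_wordBall_pos α (p - L))).trans
      (two_pow_mul_card_wordBall_sub_le hL)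
  calc _ ≤ (wordBall α p).card * ((tupleBall α β p).card * (wordBall α p).card) :=
        Nat.mul_le_mul hpow (card_filter_eq_apply_le _ _ _ fun f v => lift f z * v * (ψ z)⁻¹)
    _ = _ := by rw [card_tupleBall]; ring

theorem two_pow_mul_card_conjugateTriples_le {ψ : FreeGroup β → FreeGroup α} {C D M : ℕ}
    (hψ : ∀ z, (ψ z).norm ≤ C * z.norm + D) (hL : 0 < L) (hp : C + 4 * L ≤ p)
    (hM : 2 * p + D ≤ L * M) :
    2 ^ L * (conjugateTriples ψ p).card ≤
      (Fintype.card β + (Finset.univ : Finset (β × Bool)).offDiag.card + (wordBall β M).card) *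
        (wordBall α p).card ^ (Fintype.card β + 2) := by
  classical
  let exceptional := {f ∈ tupleBall α β p | ¬ HasSmallCancellation (C + L) L f}
  let solutions (z : FreeGroup β) := {x ∈ tupleBall α β p ×ˢ wordBall α p ×ˢ wordBall α p |
    x.2.1 = lift x.1 z * x.2.2 * (ψ z)⁻¹}
  have hsub : conjugateTriples ψ p ⊆ exceptional ×ˢ wordBall α p ×ˢ wordBall α p ∪
      (wordBall β M).biUnion solutions := by
    intro x hx
    obtain ⟨hball, z, hz⟩ := Finset.mem_filter.1 hx
    obtain ⟨hf, huv⟩ := Finset.mem_product.1 hball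
    obtain ⟨hu, hv⟩ := Finset.mem_product.1 huv
    by_cases hsc : HasSmallCancellation (C + L) L x.1
    · have hzM : z.norm ≤ M := hsc.norm_le_of_eq_lift_mul hL (mem_wordBall.1 hu)
        (mem_wordBall.1 hv) (hψ z) hM hz
      exact Finset.mem_union_right _ (Finset.mem_biUnion.2
        ⟨z, mem_wordBall.2 hzM, Finset.mem_filter.2 ⟨hball, hz⟩⟩)
    · exact Finset.mem_union_left _
        (Finset.mem_product.2 ⟨Finset.mem_filter.2 ⟨hf, hsc⟩, huv⟩)
  have hexc := two_pow_mul_card_not_hasSmallCancellation_le (α := α) (β := β) (K := C + L)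
    (L := L) (p := p) (by omega)
  calc 2 ^ L * (conjugateTriples ψ p).card
      ≤ 2 ^ L * ((exceptional ×ˢ wordBall α p ×ˢ wordBall α p).card +
          ((wordBall β M).biUnion solutions).card) :=
        Nat.mul_le_mul_left _ ((Finset.card_le_card hsub).trans (Finset.card_union_le _ _))
    _ = 2 ^ L * exceptional.card * (wordBall α p).card ^ 2 +
          2 ^ L * ((wordBall β M).biUnion solutions).card := by
        rw [Finset.card_product, Finset.card_product]; ring
    _ ≤ _ := add_le_add (Nat.mul_le_mul_right _ hexc)
        (mul_card_biUnion_le fun z _ => two_pow_mul_card_eq_lift_mul_le (by omega) ψ z)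
    _ = _ := by ring

end Density

end TwistedConjugacy

open TwistedConjugacy in
theorem generic_not_doubly_twisted_conjugate_general {α β : Type*} [DecidableEq α] [Finite α]
    [Nontrivial α] [Fintype β] [DecidableEq β] {ψ : FreeGroup β → FreeGroup α} {C D : ℕ}
    (hψ : ∀ z, (ψ z).norm ≤ C * z.norm + D) :
    Filter.Tendsto (fun p : ℕ =>
      (Nat.card {x : (β → FreeGroup α) × FreeGroup α × FreeGroup α //
          ¬ DoublyTwistedConjugate (FreeGroup.lift x.1) ψ x.2.1 x.2.2 ∧
          (∀ i, FreeGroup.norm (x.1 i) ≤ p) ∧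
          FreeGroup.norm x.2.1 ≤ p ∧ FreeGroup.norm x.2.2 ≤ p} : ℝ) /
        (Nat.card {w : FreeGroup α // FreeGroup.norm w ≤ p} : ℝ) ^ (Fintype.card β + 2))
      Filter.atTop (nhds 1) := by
  have hgrowth : Filter.Tendsto (fun p : ℕ => 2 ^ (p / 5)) Filter.atTop Filter.atTop :=
    (tendsto_pow_atTop_atTop_of_one_lt one_lt_two).comp
      (Nat.tendsto_div_const_atTop (by norm_num))
  -- For `L = p / 5` and large `p`, `C + 4 * L ≤ p` and `2 * p + D ≤ 10 * L + 8 + D ≤ 18 * L`.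
  have hlim := tendsto_div_nhds_one_of_mul_le
    (natCard_not_conjugate_add_card_conjugateTriples ψ)
    (fun p => pow_pos (card_wordBall_pos α p) _) hgrowth
    (Filter.eventually_atTop.2 ⟨5 * (C + D + 1), fun p hp =>
      two_pow_mul_card_conjugateTriples_le (M := 18) hψ (by omega) (by omega) (by omega)⟩)
  simpa only [natCard_norm_le, Nat.cast_pow] using hlim

/-- Let `G` be the free group on `m` generators, `H` the free group of
rank `n > 1`, and `ψ : G → H` any homomorphism. Then the set of triples
`(φ, u, v) ∈ H^m × H × H` (with `φ` identified with the homomorphism sending the `i`-th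
generator to its `i`-th coordinate) such that there is no `z ∈ G` with
`u = φ(z) * v * ψ(z)⁻¹` is generic: its asymptotic density in `H^{m+2}` is `1`. -/
theorem generic_not_doubly_twisted_conjugate {m n : ℕ} (hn : 1 < n)
    (ψ : FreeGroup (Fin m) →* FreeGroup (Fin n)) :
    Filter.Tendsto (fun p : ℕ =>
      (Nat.card {x : (Fin m → FreeGroup (Fin n)) × FreeGroup (Fin n) × FreeGroup (Fin n) //
          (¬ ∃ z : FreeGroup (Fin m), x.2.1 = FreeGroup.lift x.1 z * x.2.2 * (ψ z)⁻¹) ∧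
          (∀ i, FreeGroup.norm (x.1 i) ≤ p) ∧
          FreeGroup.norm x.2.1 ≤ p ∧ FreeGroup.norm x.2.2 ≤ p} : ℝ) /
        (ballCount n p : ℝ) ^ (m + 2))
      Filter.atTop (nhds 1) := by
  have : Nontrivial (Fin n) := Fin.nontrivial_iff_two_le.2 hn
  obtain ⟨C, hC⟩ := TwistedConjugacy.exists_norm_map_le ψ
  simpa only [Fintype.card_fin, TwistedConjugacy.DoublyTwistedConjugate, ballCount] using
    generic_not_doubly_twisted_conjugate_general (D := 0) hC
end

section
/- Let G be the free group on generators a_1,…,a_n (n ≥ 1) and let H be a free group of rank greater than 1. Then the set of injective homomorphisms φ : G → H, identified with n-tuples (φ(a_1),…,φ(a_n)) ∈ H^n, is generic: its asymptotic density in H^n equals 1. -/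
/-!
Fix `k` and let `p ≥ 3 * k`. If the words `f i` have length at least `2 * k` and the prefixes of
length `k` of the words `(f i)^{±1}` are pairwise distinct, then less than half of each factor
cancels in a product along a reduced word, so the product keeps the length-`k` prefix of its first
factor and `lift f` is injective. When all coordinates of `f` but one are fixed, each way of
violating these conditions determines the remaining coordinate from a word of length at most
`p - k`. Balls grow by a factor of at least `2 * |α| - 1` per unit of radius, so each violation has
density at most `(2 * |α| - 1) ^ (-k)`; there are boundedly many of them, and `k = p / 3` tends
to infinity.
-/

namespace GenericInjective

open FreeGroup Finset Filter

variable {ι α G : Type*}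

theorem eq_not_of_fst_eq_of_snd_ne {x y : α × Bool} (h₁ : x.1 = y.1) (h₂ : x.2 ≠ y.2) :
    x = (y.1, !y.2) :=
  Prod.ext h₁ (Bool.eq_not.2 h₂)

section Cancellation

theorem exists_cancellation {A B : List (α × Bool)} (hA : FreeGroup.IsReduced A)
    (hB : FreeGroup.IsReduced B) :
    ∃ r c s, A = r ++ invRev c ∧ B = c ++ s ∧ FreeGroup.IsReduced (r ++ s) := by
  induction B generalizing A with
  | nil => exact ⟨A, [], [], by simp, rfl, by simpa using hA⟩
  | cons b B ih =>
    rcases A.eq_nil_or_concat with rfl | ⟨A, a, rfl⟩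
    · exact ⟨[], [], b :: B, rfl, rfl, hB⟩
    rw [List.concat_eq_append] at *
    by_cases hab : a.1 = b.1 → a.2 = b.2
    · refine ⟨A ++ [a], [], b :: B, by simp, rfl, ?_⟩
      rw [List.append_assoc]
      exact List.isChain_append_cons_cons.2 ⟨hA, hab, hB⟩
    · obtain ⟨h₁, h₂⟩ := Classical.not_imp.1 hab
      obtain rfl := eq_not_of_fst_eq_of_snd_ne h₁ h₂
      obtain ⟨r, c, s, rfl, rfl, hrs⟩ :=
        ih (hA.infix (List.prefix_append ..).isInfix) (hB.infix (List.suffix_cons ..).isInfix)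
      exact ⟨r, b :: c, s, by simp [invRev], rfl, hrs⟩

variable [DecidableEq α]

theorem toWord_mk_of_isReduced {L : List (α × Bool)} (hL : FreeGroup.IsReduced L) :
    (FreeGroup.mk L).toWord = L := by
  rw [toWord_mk, hL.reduce_eq]

theorem exists_toWord_mul (u v : FreeGroup α) :
    ∃ r c s, u.toWord = r ++ invRev c ∧ v.toWord = c ++ s ∧ (u * v).toWord = r ++ s := by
  obtain ⟨r, c, s, hu, hv, hrs⟩ :=
    exists_cancellation (isReduced_toWord (x := u)) (isReduced_toWord (x := v))
  have huv : u * v = FreeGroup.mk (r ++ s) := by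
    rw [← mk_toWord (x := u), ← mk_toWord (x := v), hu, hv, ← mul_mk, ← mul_mk, ← mul_mk,
      ← inv_mk]
    group
  exact ⟨r, c, s, hu, hv, huv ▸ toWord_mk_of_isReduced hrs⟩

end Cancellation

section Prefix

variable [DecidableEq α] {k : ℕ} {u v w : FreeGroup α}

/-- The first `k` letters of the reduced word of `w`, or all of them if there are fewer. -/
def wordPrefix (k : ℕ) (w : FreeGroup α) : List (α × Bool) :=
  w.toWord.take k

/-- The element left over when the first `k` letters of the reduced word of `w` are deleted. -/
def dropPrefix (k : ℕ) (w : FreeGroup α) : FreeGroup α :=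
  FreeGroup.mk (w.toWord.drop k)

theorem length_wordPrefix (k : ℕ) (w : FreeGroup α) :
    (wordPrefix k w).length = min k w.norm :=
  List.length_take

theorem toWord_dropPrefix (k : ℕ) (w : FreeGroup α) :
    (dropPrefix k w).toWord = w.toWord.drop k :=
  toWord_mk_of_isReduced (isReduced_toWord.infix (List.drop_suffix ..).isInfix)

theorem norm_dropPrefix (k : ℕ) (w : FreeGroup α) : (dropPrefix k w).norm = w.norm - k := by
  rw [FreeGroup.norm, toWord_dropPrefix, List.length_drop, FreeGroup.norm]

theorem eq_of_wordPrefix_eq_of_dropPrefix_eq (hp : wordPrefix k v = wordPrefix k w)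
    (hd : dropPrefix k v = dropPrefix k w) : v = w := by
  apply toWord_injective
  rw [← List.take_append_drop k v.toWord, ← List.take_append_drop k w.toWord]
  exact congrArg₂ (· ++ ·) hp (by rw [← toWord_dropPrefix, hd, toWord_dropPrefix])

theorem wordPrefix_mul (hu : 2 * k ≤ u.norm) (h : wordPrefix k u⁻¹ ≠ wordPrefix k v) :
    wordPrefix k (u * v) = wordPrefix k u := by
  obtain ⟨r, c, s, hr, hc, hrs⟩ := exists_toWord_mul u v
  have hck : c.length < k := by
    by_contra! hkc
    apply h
    rw [wordPrefix, wordPrefix, toWord_inv, hr, hc, invRev_append, invRev_invRev,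
      List.take_append_of_le_length hkc, List.take_append_of_le_length hkc]
  have hkr : k ≤ r.length := by
    rw [FreeGroup.norm, hr, List.length_append, invRev_length] at hu
    omega
  rw [wordPrefix, wordPrefix, hrs, hr, List.take_append_of_le_length hkr,
    List.take_append_of_le_length hkr]

theorem wordPrefix_inv_dropPrefix (hw : 2 * k ≤ w.norm) :
    wordPrefix k (dropPrefix k w)⁻¹ = wordPrefix k w⁻¹ := by
  have hk : k ≤ (invRev (w.toWord.drop k)).length := by
    rw [invRev_length, List.length_drop, ← FreeGroup.norm]
    omega
  have hinv : w⁻¹.toWord = invRev (w.toWord.drop k) ++ invRev (w.toWord.take k) := by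
    rw [toWord_inv, ← invRev_append, List.take_append_drop]
  rw [wordPrefix, wordPrefix, toWord_inv, toWord_dropPrefix, hinv,
    List.take_append_of_le_length hk]

end Prefix

section PingPong

/-- The value `(f i)^{±1}` of the letter `x = (i, ±)` under the homomorphism sending the `i`-th
generator to `f i`; as in `FreeGroup`, the sign `true` stands for `+`. -/
def signedImage [Inv G] (f : ι → G) (x : ι × Bool) : G :=
  cond x.2 (f x.1) (f x.1)⁻¹

theorem signedImage_not [InvolutiveInv G] (f : ι → G) (x : ι × Bool) :
    signedImage f (x.1, !x.2) = (signedImage f x)⁻¹ := by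
  rcases x with ⟨i, _ | _⟩ <;> simp [signedImage]

theorem lift_mk_cons [Group G] (f : ι → G) (x : ι × Bool) (L : List (ι × Bool)) :
    lift f (FreeGroup.mk (x :: L)) = signedImage f x * lift f (FreeGroup.mk L) := by
  simp [lift_mk, signedImage]

variable [DecidableEq α] {k : ℕ} {f : ι → FreeGroup α}

theorem norm_signedImage (f : ι → FreeGroup α) (x : ι × Bool) :
    (signedImage f x).norm = (f x.1).norm := by
  rcases x with ⟨i, _ | _⟩ <;> simp [signedImage]

/-- The small cancellation condition at scale `k` on a tuple of words: they have length at least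
`2 * k`, and the words together with their inverses have distinct prefixes of length `k`. -/
structure IsPrefixSeparated (k : ℕ) (f : ι → FreeGroup α) : Prop where
  two_mul_le_norm (i : ι) : 2 * k ≤ (f i).norm
  prefix_injective : Function.Injective fun x ↦ wordPrefix k (signedImage f x)

namespace IsPrefixSeparated

theorem wordPrefix_lift_mk_cons (hf : IsPrefixSeparated k f) {x : ι × Bool}
    {L : List (ι × Bool)} (hL : FreeGroup.IsReduced (x :: L)) :
    wordPrefix k (lift f (FreeGroup.mk (x :: L))) = wordPrefix k (signedImage f x) := by
  induction L generalizing x with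
  | nil => simp [lift_mk, signedImage]
  | cons y L ih =>
    obtain ⟨hxy, hL⟩ := isReduced_cons_cons.1 hL
    have hne : (x.1, !x.2) ≠ y := by rintro rfl; simp at hxy
    rw [lift_mk_cons]
    apply wordPrefix_mul
    · rw [norm_signedImage]
      exact hf.two_mul_le_norm x.1
    · rw [ih hL, ← signedImage_not]
      exact hf.prefix_injective.ne hne

theorem injective_lift (hf : IsPrefixSeparated k f) : Function.Injective (lift f) := by
  classical
  rw [injective_iff_map_eq_one]
  intro w hw
  by_contra hne
  obtain ⟨x, L, hxL⟩ := List.exists_cons_of_ne_nil (mt toWord_eq_nil_iff.1 hne)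
  have hfirst : wordPrefix k (signedImage f x) = wordPrefix k 1 := by
    rw [← hf.wordPrefix_lift_mk_cons (hxL ▸ isReduced_toWord), ← hxL, mk_toWord, hw]
  have hk : k = 0 := by
    have hlen := congrArg List.length hfirst
    have hnorm := hf.two_mul_le_norm x.1
    rw [length_wordPrefix, length_wordPrefix, norm_signedImage, FreeGroup.norm_one] at hlen
    omega
  have hx : x = (x.1, !x.2) := hf.prefix_injective (by simp [wordPrefix, hk])
  grind

end IsPrefixSeparated

theorem exists_of_not_isPrefixSeparated (hf : ¬ IsPrefixSeparated k f) :
    (∃ i, (f i).norm < 2 * k) ∨ ∃ xy : (ι × Bool) × (ι × Bool), xy.1 ≠ xy.2 ∧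
      2 * k ≤ (signedImage f xy.1).norm ∧
      wordPrefix k (signedImage f xy.1) = wordPrefix k (signedImage f xy.2) := by
  by_contra! h
  refine hf ⟨h.1, fun x y hxy ↦ ?_⟩
  by_contra hne
  exact h.2 (x, y) hne ((h.1 x.1).trans_eq (norm_signedImage f x).symm) hxy

end PingPong

section Counting

theorem mul_card_filter_exists_le {κ β : Type*} [Fintype κ] {s : Finset β} {R : κ → β → Prop}
    [∀ j, DecidablePred (R j)] [DecidablePred fun b ↦ ∃ j, R j b] {N C : ℕ}
    (h : ∀ j, N * #{b ∈ s | R j b} ≤ C) :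
    N * #{b ∈ s | ∃ j, R j b} ≤ Fintype.card κ * C := by
  classical
  have hunion : ({b ∈ s | ∃ j, R j b} : Finset β) = univ.biUnion fun j ↦ {b ∈ s | R j b} := by
    ext b
    simp
  calc N * #{b ∈ s | ∃ j, R j b}
      ≤ N * ∑ j, #{b ∈ s | R j b} := by rw [hunion]; gcongr; exact card_biUnion_le
    _ = ∑ j, N * #{b ∈ s | R j b} := mul_sum ..
    _ ≤ Fintype.card κ * C := sum_le_card_nsmul _ _ _ fun j _ ↦ h j

theorem mul_card_filter_piFinset_le [Fintype ι] [DecidableEq ι] {β : Type*} {s : Finset β}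
    {R : (ι → β) → Prop} [DecidablePred R] {N : ℕ} (i : ι)
    (h : ∀ f, N * #{b ∈ s | R (Function.update f i b)} ≤ #s) :
    N * #{f ∈ Fintype.piFinset fun _ ↦ s | R f} ≤ #s ^ Fintype.card ι := by
  classical
  let restrict (f : ι → β) (j : {j // j ≠ i}) : β := f j
  set A : Finset (ι → β) := {f ∈ Fintype.piFinset fun _ ↦ s | R f}
  set T := Fintype.piFinset fun _ : {j // j ≠ i} ↦ s
  have hmaps : ∀ f ∈ A, restrict f ∈ T := fun f hf ↦
    Fintype.mem_piFinset.2 fun j ↦ Fintype.mem_piFinset.1 (mem_filter.1 hf).1 j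
  have hfibre : ∀ g ∈ T, N * #{f ∈ A | restrict f = g} ≤ #s := by
    intro g _
    rcases ({f ∈ A | restrict f = g} : Finset _).eq_empty_or_nonempty with hempty | ⟨f₀, hf₀⟩
    · simp [hempty]
    have hupdate : ∀ f ∈ ({f ∈ A | restrict f = g} : Finset _), Function.update f₀ i (f i) = f := by
      intro f hf
      have hrestrict := (mem_filter.1 hf₀).2.trans (mem_filter.1 hf).2.symm
      exact Function.update_eq_iff.2 ⟨rfl, fun j hj ↦ congrFun hrestrict ⟨j, hj⟩⟩
    refine (Nat.mul_le_mul_left N (card_le_card_of_injOn (fun f ↦ f i) ?_ ?_)).trans (h f₀)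
    · intro f hf
      have hfA := mem_filter.1 (mem_filter.1 hf).1
      refine mem_filter.2 ⟨Fintype.mem_piFinset.1 hfA.1 i, ?_⟩
      rw [hupdate f hf]
      exact hfA.2
    · intro f hf f' hf' (hff' : f i = f' i)
      rw [← hupdate f hf, ← hupdate f' hf', hff']
  calc N * #A = ∑ g ∈ T, N * #{f ∈ A | restrict f = g} := by
        rw [card_eq_sum_card_fiberwise hmaps, mul_sum]
    _ ≤ #T * #s := sum_le_card_nsmul _ _ _ hfibre
    _ = #s ^ Fintype.card ι := by
        have hcard : Fintype.card {j // j ≠ i} + 1 = Fintype.card ι := by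
          rw [Fintype.card_subtype_compl, Fintype.card_subtype_eq,
            Nat.sub_add_cancel (Fintype.card_pos_iff.2 ⟨i⟩)]
        rw [Fintype.card_piFinset, prod_const, card_univ, ← pow_succ, hcard]

end Counting

section Ball

theorem finite_norm_le [Finite α] [DecidableEq α] (p : ℕ) : {w : FreeGroup α | w.norm ≤ p}.Finite :=
  .of_finite_image ((List.finite_length_le _ p).subset (Set.image_subset_iff.2 fun _ hw ↦ hw))
    toWord_injective.injOn

variable [Fintype α]

open scoped Classical in
theorem card_isReduced_cons_ge {L : List (α × Bool)} (hL : FreeGroup.IsReduced L) :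
    2 * Fintype.card α - 1 ≤ #{x : α × Bool | FreeGroup.IsReduced (x :: L)} := by
  have hcard : Fintype.card (α × Bool) = 2 * Fintype.card α := by simp [mul_comm]
  rcases L with _ | ⟨y, L⟩
  · simp [FreeGroup.IsReduced, mul_comm]
  · calc 2 * Fintype.card α - 1 = #(univ.erase (y.1, !y.2)) := by
          rw [card_erase_of_mem (mem_univ _), card_univ, hcard]
      _ ≤ #{x : α × Bool | FreeGroup.IsReduced (x :: y :: L)} := by
          refine card_le_card fun x hx ↦ ?_
          have hxy : x.1 = y.1 → x.2 = y.2 := fun h₁ ↦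
            of_not_not fun h₂ ↦ ne_of_mem_erase hx (eq_not_of_fst_eq_of_snd_ne h₁ h₂)
          simpa using isReduced_cons_cons.2 ⟨hxy, hL⟩

variable [DecidableEq α] {k p : ℕ}

/-- The set `H_p` of elements of word length at most `p` of the free group `H` on `α`. -/
noncomputable def ball (α : Type*) [Fintype α] [DecidableEq α] (p : ℕ) : Finset (FreeGroup α) :=
  (finite_norm_le p).toFinset

@[simp]
theorem mem_ball {w : FreeGroup α} : w ∈ ball α p ↔ w.norm ≤ p := by
  simp [ball]

theorem mul_card_ball_le_card_ball_succ (p : ℕ) :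
    (2 * Fintype.card α - 1) * #(ball α p) ≤ #(ball α (p + 1)) := by
  classical
  apply mul_card_image_le_card_of_maps_to (f := dropPrefix 1)
  · intro w hw
    rw [mem_ball] at hw ⊢
    rw [norm_dropPrefix]
    omega
  · intro u hu
    have htoWord : ∀ x ∈ ({x | FreeGroup.IsReduced (x :: u.toWord)} : Finset (α × Bool)),
        (FreeGroup.mk (x :: u.toWord)).toWord = x :: u.toWord :=
      fun x hx ↦ toWord_mk_of_isReduced (mem_filter.1 hx).2
    refine (card_isReduced_cons_ge (isReduced_toWord (x := u))).trans
      (card_le_card_of_injOn (fun x ↦ FreeGroup.mk (x :: u.toWord)) ?_ ?_)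
    · intro x hx
      have hnorm : (FreeGroup.mk (x :: u.toWord)).norm = u.norm + 1 :=
        congrArg List.length (htoWord x hx)
      have hdrop : dropPrefix 1 (FreeGroup.mk (x :: u.toWord)) = u := by
        rw [dropPrefix, htoWord x hx, List.drop_one, List.tail_cons, mk_toWord]
      simpa [hnorm, hdrop] using hu
    · intro x hx y hy hxy
      have hcons := congrArg toWord hxy
      rw [htoWord x hx, htoWord y hy] at hcons
      exact (List.cons.inj hcons).1

theorem pow_mul_card_ball_le (p k : ℕ) :
    (2 * Fintype.card α - 1) ^ k * #(ball α p) ≤ #(ball α (p + k)) := by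
  induction k with
  | zero => simp
  | succ k ih =>
    rw [pow_succ', mul_assoc]
    exact (Nat.mul_le_mul_left _ ih).trans (mul_card_ball_le_card_ball_succ (p + k))

theorem pow_mul_card_le_card_ball {S : Finset (FreeGroup α)} (hk : k ≤ p)
    (hS : #S ≤ #(ball α (p - k))) : (2 * Fintype.card α - 1) ^ k * #S ≤ #(ball α p) := by
  grw [hS, pow_mul_card_ball_le, Nat.sub_add_cancel hk]

theorem pow_mul_card_filter_norm_lt_le (hk : 3 * k ≤ p) :
    (2 * Fintype.card α - 1) ^ k * #{w ∈ ball α p | w.norm < 2 * k} ≤ #(ball α p) := by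
  refine pow_mul_card_le_card_ball (by omega) (card_le_card fun w hw ↦ ?_)
  rw [mem_filter] at hw
  rw [mem_ball]
  omega

theorem pow_mul_card_filter_le_of_injOn {P : FreeGroup α → Prop} [DecidablePred P] (hk : k ≤ p)
    (hP : Set.InjOn (dropPrefix k) {w | P w}) :
    (2 * Fintype.card α - 1) ^ k * #{w ∈ ball α p | P w} ≤ #(ball α p) := by
  refine pow_mul_card_le_card_ball hk (card_le_card_of_injOn (dropPrefix k) ?_ ?_)
  · intro w hw
    have hwp := mem_ball.1 (mem_filter.1 hw).1
    simpa [norm_dropPrefix] using hwp.trans le_tsub_add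
  · exact hP.mono fun w hw ↦ (mem_filter.1 hw).2

theorem pow_mul_card_filter_wordPrefix_eq_le (hk : k ≤ p) (L : List (α × Bool)) :
    (2 * Fintype.card α - 1) ^ k * #{w ∈ ball α p | wordPrefix k w = L} ≤ #(ball α p) :=
  pow_mul_card_filter_le_of_injOn hk fun _ hv _ hw ↦
    eq_of_wordPrefix_eq_of_dropPrefix_eq (hv.trans hw.symm)

theorem pow_mul_card_filter_wordPrefix_eq_wordPrefix_inv_le (hk : k ≤ p) :
    (2 * Fintype.card α - 1) ^ k *
      #{w ∈ ball α p | 2 * k ≤ w.norm ∧ wordPrefix k w = wordPrefix k w⁻¹} ≤ #(ball α p) := by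
  refine pow_mul_card_filter_le_of_injOn hk fun v hv w hw hd ↦
    eq_of_wordPrefix_eq_of_dropPrefix_eq ?_ hd
  rw [hv.2, hw.2, ← wordPrefix_inv_dropPrefix hv.1, ← wordPrefix_inv_dropPrefix hw.1, hd]

theorem card_filter_ball_le_of_imp_cond_inv (b : Bool) {P Q : FreeGroup α → Prop}
    [DecidablePred P] [DecidablePred Q] (h : ∀ w, Q w → P (cond b w w⁻¹)) :
    #{w ∈ ball α p | Q w} ≤ #{w ∈ ball α p | P w} := by
  refine card_le_card_of_injOn (fun w ↦ cond b w w⁻¹) ?_ ?_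
  · intro w hw
    obtain ⟨hwp, hQ⟩ := mem_filter.1 hw
    refine mem_filter.2 ⟨?_, h w hQ⟩
    cases b <;> simpa using hwp
  · intro v _ w _ hvw
    cases b
    · exact inv_injective hvw
    · exact hvw

end Ball

section Density

variable [Fintype α] [DecidableEq α] [Fintype ι] [DecidableEq ι] {k p : ℕ}

/-- The set `H_p ^ ι` of tuples of elements of word length at most `p`. -/
noncomputable def tupleBall (ι α : Type*) [Fintype ι] [DecidableEq ι] [Fintype α] [DecidableEq α]
    (p : ℕ) : Finset (ι → FreeGroup α) :=
  Fintype.piFinset fun _ ↦ ball α p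

theorem mem_tupleBall {f : ι → FreeGroup α} : f ∈ tupleBall ι α p ↔ ∀ i, (f i).norm ≤ p := by
  simp [tupleBall]

theorem card_tupleBall (p : ℕ) : #(tupleBall ι α p) = #(ball α p) ^ Fintype.card ι := by
  simp [tupleBall]

theorem tupleBall_nonempty (p : ℕ) : (tupleBall ι α p).Nonempty :=
  ⟨1, mem_tupleBall.2 fun _ ↦ by simp⟩

theorem pow_mul_card_filter_tupleBall_le {R : (ι → FreeGroup α) → Prop} [DecidablePred R]
    (i : ι)
    (h : ∀ f, (2 * Fintype.card α - 1) ^ k * #{w ∈ ball α p | R (Function.update f i w)} ≤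
      #(ball α p)) :
    (2 * Fintype.card α - 1) ^ k * #{f ∈ tupleBall ι α p | R f} ≤ #(tupleBall ι α p) := by
  rw [card_tupleBall]
  exact mul_card_filter_piFinset_le i h

theorem pow_mul_card_filter_clash_le (hk : k ≤ p) {x y : ι × Bool} (hxy : x ≠ y) :
    (2 * Fintype.card α - 1) ^ k * #{f ∈ tupleBall ι α p | 2 * k ≤ (signedImage f x).norm ∧
      wordPrefix k (signedImage f x) = wordPrefix k (signedImage f y)} ≤
      #(tupleBall ι α p) := by
  refine pow_mul_card_filter_tupleBall_le x.1 fun f ↦ ?_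
  have hx (w : FreeGroup α) :
      signedImage (Function.update f x.1 w) x = cond x.2 w w⁻¹ := by
    simp [signedImage]
  by_cases hi : y.1 = x.1
  · obtain rfl := eq_not_of_fst_eq_of_snd_ne hi fun h₂ ↦ hxy (Prod.ext hi h₂).symm
    refine (Nat.mul_le_mul_left _ (card_filter_ball_le_of_imp_cond_inv x.2 fun w hw ↦ ?_)).trans
      (pow_mul_card_filter_wordPrefix_eq_wordPrefix_inv_le hk)
    simpa only [signedImage_not, hx] using hw
  · have hy (w : FreeGroup α) : signedImage (Function.update f x.1 w) y = signedImage f y := by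
      simp [signedImage, hi]
    refine (Nat.mul_le_mul_left _ (card_filter_ball_le_of_imp_cond_inv x.2 fun w hw ↦ ?_)).trans
      (pow_mul_card_filter_wordPrefix_eq_le hk (wordPrefix k (signedImage f y)))
    simpa only [hx, hy] using hw.2

open scoped Classical in
theorem pow_mul_card_not_isPrefixSeparated_le (hk : 3 * k ≤ p) :
    (2 * Fintype.card α - 1) ^ k * #{f ∈ tupleBall ι α p | ¬ IsPrefixSeparated k f} ≤
      (Fintype.card ι + (2 * Fintype.card ι) ^ 2) * #(tupleBall ι α p) := by
  set N := (2 * Fintype.card α - 1) ^ k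
  let short (i : ι) (f : ι → FreeGroup α) : Prop := (f i).norm < 2 * k
  let clash (xy : (ι × Bool) × (ι × Bool)) (f : ι → FreeGroup α) : Prop :=
    xy.1 ≠ xy.2 ∧ 2 * k ≤ (signedImage f xy.1).norm ∧
      wordPrefix k (signedImage f xy.1) = wordPrefix k (signedImage f xy.2)
  have hshort (i : ι) : N * #{f ∈ tupleBall ι α p | short i f} ≤ #(tupleBall ι α p) :=
    pow_mul_card_filter_tupleBall_le i fun f ↦ by
      simpa [short] using pow_mul_card_filter_norm_lt_le hk
  have hclash xy : N * #{f ∈ tupleBall ι α p | clash xy f} ≤ #(tupleBall ι α p) := by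
    by_cases hxy : xy.1 = xy.2
    · simp [clash, hxy]
    · simpa [clash, hxy] using pow_mul_card_filter_clash_le (by omega) hxy
  calc N * #{f ∈ tupleBall ι α p | ¬ IsPrefixSeparated k f}
      ≤ N * #{f ∈ tupleBall ι α p | (∃ i, short i f) ∨ ∃ xy, clash xy f} :=
        Nat.mul_le_mul_left N <| card_le_card <| monotone_filter_right _
          fun _ _ ↦ exists_of_not_isPrefixSeparated
    _ ≤ N * #{f ∈ tupleBall ι α p | ∃ i, short i f} +
          N * #{f ∈ tupleBall ι α p | ∃ xy, clash xy f} := by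
        rw [filter_or, ← mul_add]
        exact Nat.mul_le_mul_left N (card_union_le _ _)
    _ ≤ Fintype.card ι * #(tupleBall ι α p) +
          Fintype.card ((ι × Bool) × (ι × Bool)) * #(tupleBall ι α p) :=
        add_le_add (mul_card_filter_exists_le hshort) (mul_card_filter_exists_le hclash)
    _ = (Fintype.card ι + (2 * Fintype.card ι) ^ 2) * #(tupleBall ι α p) := by
        simp only [Fintype.card_prod, Fintype.card_bool]
        ring

open scoped Classical in
theorem tendsto_card_not_injective_lift_div_card [Nontrivial α] :
    Tendsto (fun p ↦ (#{f ∈ tupleBall ι α p | ¬ Function.Injective (lift f)} : ℝ) /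
      #(tupleBall ι α p)) atTop (nhds 0) := by
  set r := 2 * Fintype.card α - 1
  set C := Fintype.card ι + (2 * Fintype.card ι) ^ 2
  have hr : 1 < (r : ℝ) := by
    have hα := Fintype.one_lt_card (α := α)
    exact_mod_cast (by omega : 1 < r)
  have hbound (p : ℕ) : r ^ (p / 3) * #{f ∈ tupleBall ι α p | ¬ Function.Injective (lift f)} ≤
      C * #(tupleBall ι α p) :=
    (Nat.mul_le_mul_left _ (card_le_card (monotone_filter_right _
      fun _ _ ↦ mt IsPrefixSeparated.injective_lift))).trans
      (pow_mul_card_not_isPrefixSeparated_le (Nat.mul_div_le p 3))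
  have hlim : Tendsto (fun p ↦ (C : ℝ) / (r : ℝ) ^ (p / 3)) atTop (nhds 0) :=
    tendsto_const_nhds.div_atTop
      ((tendsto_pow_atTop_atTop_of_one_lt hr).comp (Nat.tendsto_div_const_atTop three_ne_zero))
  refine squeeze_zero (fun p ↦ by positivity) (fun p ↦ ?_) hlim
  have hpos : (0 : ℝ) < #(tupleBall ι α p) := by exact_mod_cast (tupleBall_nonempty p).card_pos
  rw [div_le_div_iff₀ hpos (by positivity), mul_comm]
  exact_mod_cast hbound p

open scoped Classical in
theorem tendsto_card_injective_lift_div_card [Nontrivial α] :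
    Tendsto (fun p ↦ (#{f ∈ tupleBall ι α p | Function.Injective (lift f)} : ℝ) /
      #(tupleBall ι α p)) atTop (nhds 1) := by
  have hlim := tendsto_card_not_injective_lift_div_card (ι := ι) (α := α)
  refine (sub_zero (1 : ℝ) ▸ hlim.const_sub 1).congr fun p ↦ ?_
  have hne : (#(tupleBall ι α p) : ℝ) ≠ 0 := by exact_mod_cast (tupleBall_nonempty p).card_pos.ne'
  rw [one_sub_div hne, ← card_filter_add_card_filter_not (s := tupleBall ι α p)
    (fun f ↦ Function.Injective (lift f))]
  push_cast
  ring

end Density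

end GenericInjective

open GenericInjective Finset in
theorem generic_injective_general {ι α : Type*} [Finite ι] [Finite α] [Nontrivial α]
    [DecidableEq α] :
    Filter.Tendsto (fun p : ℕ ↦
      (Nat.card {f : ι → FreeGroup α //
          Function.Injective (FreeGroup.lift f) ∧ ∀ i, (f i).norm ≤ p} : ℝ) /
        (Nat.card {w : FreeGroup α // w.norm ≤ p} : ℝ) ^ Nat.card ι)
      Filter.atTop (nhds 1) := by
  classical
  cases nonempty_fintype ι
  cases nonempty_fintype α
  have hlim := tendsto_card_injective_lift_div_card (ι := ι) (α := α)
  refine hlim.congr fun p ↦ ?_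
  have hball : Nat.card {w : FreeGroup α // w.norm ≤ p} = #(ball α p) :=
    Nat.subtype_card _ fun _ ↦ mem_ball
  have hinj : Nat.card {f : ι → FreeGroup α //
      Function.Injective (FreeGroup.lift f) ∧ ∀ i, (f i).norm ≤ p} =
      #{f ∈ tupleBall ι α p | Function.Injective (FreeGroup.lift f)} :=
    Nat.subtype_card _ fun f ↦ by
      rw [mem_filter, mem_tupleBall, and_comm]
  rw [hball, hinj, card_tupleBall, Nat.cast_pow, Nat.card_eq_fintype_card]

/-- Let `G` be the free group on `m ≥ 1` generators and `H` the free
group of rank `n > 1`. The set of injective homomorphisms `G → H`, identified with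
`m`-tuples of elements of `H`, is generic: its asymptotic density in `H^m` is `1`. -/
theorem generic_injective {m n : ℕ} (hm : 1 ≤ m) (hn : 1 < n) :
    Filter.Tendsto (fun p : ℕ =>
      (Nat.card {f : Fin m → FreeGroup (Fin n) //
          Function.Injective (FreeGroup.lift f) ∧
          ∀ i, FreeGroup.norm (f i) ≤ p} : ℝ) / (ballCount n p : ℝ) ^ m)
      Filter.atTop (nhds 1) := by
  have : Nontrivial (Fin n) := Fin.nontrivial_iff_two_le.2 hn
  simpa [ballCount] using generic_injective_general (ι := Fin m) (α := Fin n)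
end
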